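/- arXiv:1705.08777 — 3 statements merged into one kernel-verified Lean document; each statement's English description precedes it below -/
import Mathlib

section
/- For every integer g ≥ 2, the homomorphism S_{2g+2} → Sp_{2g}(ℤ/2ℤ) induced by the permutation action of S_{2g+2} on the coordinates of V = (ℤ/2ℤ)^{2g+2}, descended to W = t^⊥/span(t), is injective; that is, the symmetric group S_{2g+2} embeds as a subgroup of Sp_{2g}(ℤ/2ℤ). -/
open Matrix

/-- The standard symplectic matrix `Ω`, block-diagonal with `2×2` blocks `[[0,1],[-1,0]]`. -/
def OmegaMat (g : ℕ) (R : Type) [CommRing R] : Matrix (Fin (2*g)) (Fin (2*g)) R :=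
  Matrix.of fun i j =>
    if (i : ℕ) + 1 = (j : ℕ) ∧ (j : ℕ) % 2 = 1 then 1
    else if (j : ℕ) + 1 = (i : ℕ) ∧ (i : ℕ) % 2 = 1 then -1 else 0

/-- The symplectic group `Sp_{2g}(R)`, as a set of invertible matrices:
those `S` with `SᵀΩS = Ω`. -/
def SpSet (g : ℕ) (R : Type) [CommRing R] : Set (GL (Fin (2*g)) R) :=
  {S | (S : Matrix (Fin (2*g)) (Fin (2*g)) R)ᵀ * OmegaMat g R * S = OmegaMat g R}

/-- The general symplectic group `GSp_{2g}(R)`, as a set of invertible matrices: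
those `S` with `SᵀΩS = m·Ω` for some unit `m` (the multiplier). -/
def GSpSet (g : ℕ) (R : Type) [CommRing R] : Set (GL (Fin (2*g)) R) :=
  {S | ∃ m : Rˣ, (S : Matrix (Fin (2*g)) (Fin (2*g)) R)ᵀ * OmegaMat g R * S = (m : R) • OmegaMat g R}

/-- The all-ones vector `t ∈ V = (ℤ/2ℤ)^{2g+2}`. -/
def tvec (g : ℕ) : Fin (2*g+2) → ZMod 2 := fun _ => 1

/-- The line spanned by `t`. -/
def tline (g : ℕ) : Submodule (ZMod 2) (Fin (2*g+2) → ZMod 2) :=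
  Submodule.span (ZMod 2) {tvec g}

/-- `t^⊥`: the vectors of `V` orthogonal to `t` for the standard bilinear form
`⟨u,v⟩ = ∑ uᵢvᵢ`, i.e. those whose coordinates sum to zero. -/
def tperp (g : ℕ) : Set (Fin (2*g+2) → ZMod 2) := {v | ∑ i, v i = 0}

/-- The matrix of the map `ψ : M → V` sending the symplectic basis vector `f_{1,n}`
(column `2n-2`, 0-based) of `M = (ℤ/2ℤ)^{2g}` to `ē_1 + ⋯ + ē_{2n}` and `f_{2,n}`
(column `2n-1`) to `ē_{2n+1} + ē_1 + ⋯ + ē_{2n-1}`; `ψ` composed with the quotient map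
`t^⊥ → W = t^⊥/span(t)` is the identification of `M` with `W` used to realize the
isometries of `W` as the matrix group `Sp_{2g}(ℤ/2ℤ)`. -/
def PsiMat (g : ℕ) : Matrix (Fin (2*g+2)) (Fin (2*g)) (ZMod 2) :=
  Matrix.of fun k j =>
    if (j : ℕ) % 2 = 0 then (if (k : ℕ) < (j : ℕ) + 2 then 1 else 0)
    else (if (k : ℕ) < (j : ℕ) ∨ (k : ℕ) = (j : ℕ) + 1 then 1 else 0)

/-- The permutation matrix of `σ`, acting on coordinates of `V`: `(P_σ v) k = v (σ⁻¹ k)`. -/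
def permMat (g : ℕ) (σ : Equiv.Perm (Fin (2*g+2))) :
    Matrix (Fin (2*g+2)) (Fin (2*g+2)) (ZMod 2) :=
  Matrix.of fun k j => if σ j = k then 1 else 0

/-- `A ∈ Sp_{2g}(ℤ/2ℤ)` is the matrix (w.r.t. the symplectic basis carried by `ψ`) of the
action of the permutation `σ ∈ S_{2g+2}` on `W = t^⊥/span(t)`: this says that each column of
`Ψ·A − P_σ·Ψ` lies in `span(t)`, i.e. `ψ(A·m) ≡ σ·ψ(m) mod t` for every `m ∈ M`.
The embedded copy of `S_{2g+2}` inside `Sp_{2g}(ℤ/2ℤ)` is the set of matrices representing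
some permutation in this sense. -/
def representsPerm (g : ℕ) (A : Matrix (Fin (2*g)) (Fin (2*g)) (ZMod 2))
    (σ : Equiv.Perm (Fin (2*g+2))) : Prop :=
  ∀ j, (fun k => (PsiMat g * A - permMat g σ * PsiMat g) k j) ∈ tline g

/-!
The vector `t` is isotropic, the Gram matrix `ΨᵀΨ` of the columns of `Ψ` is the invertible matrix
`Ω`, and these `2g` columns are orthogonal to `t`. Hence they are linearly independent modulo `t`,
and by dimension `t^⊥ = im Ψ ⊕ span t`. A permutation matrix `P` is orthogonal and fixes `t`, so
`PΨ = ΨA + t cᵀ` has a solution `A`; multiplying by `Ψᵀ` shows that `A` is unique, and comparing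
Gram matrices of both sides shows that it is symplectic.

If `A` represents both `σ` and `τ`, then `σ w - τ w` is a multiple of `t` for every `w ∈ t^⊥`, which
forces `σ = τ` as soon as there are at least five coordinates.
-/

/-- If `σ a ≠ τ a`, the vector `e_{σ a} - e_b` gives the difference `1` at `a`, whereas the
difference is `0` at any point that neither `σ` nor `τ` sends into `{σ a, b}`; five points are
enough to find such a point. -/
theorem perm_eq_of_forall_comp_sub_comp_const {ι R : Type*} [Fintype ι] [Ring R] [Nontrivial R]
    (hι : 4 < Fintype.card ι) {σ τ : Equiv.Perm ι}
    (h : ∀ w : ι → R, ∑ i, w i = 0 → ∃ c, ∀ i, w (σ i) - w (τ i) = c) : σ = τ := by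
  classical
  ext a
  by_contra hne
  have exists_avoiding (l : List ι) (hl : l.length ≤ 4) : ∃ i, i ∉ l :=
    Cardinal.exists_notMem_of_length_lt l <| by
      simpa only [Cardinal.mk_fintype, Nat.cast_lt] using hl.trans_lt hι
  obtain ⟨b, hb⟩ := exists_avoiding [σ a, τ a] (by simp)
  obtain ⟨k, hk⟩ := exists_avoiding [a, σ.symm b, τ.symm (σ a), τ.symm b] (by simp)
  simp only [List.mem_cons, List.not_mem_nil, or_false, not_or, Equiv.eq_symm_apply] at hb hk
  obtain ⟨hbσ, hbτ⟩ := hb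
  obtain ⟨hka, hkσ, hkτa, hkτ⟩ := hk
  obtain ⟨c, hc⟩ := h (Pi.single (σ a) 1 - Pi.single b 1) (by simp)
  have at_a : (1 : R) = c := by
    simpa [Pi.single_apply, Ne.symm hbσ, Ne.symm hbτ, Ne.symm hne] using hc a
  have at_k : (0 : R) = c := by
    simpa [Pi.single_apply, hka, hkσ, hkτa, hkτ] using hc k
  exact one_ne_zero (at_a.trans at_k.symm)

section ModLine

variable {m n R K : Type*} [Fintype m] [Fintype n] [CommRing R] [Field K]

/-- `A` is the matrix, with respect to the columns of `Ψ`, of the map that `P` induces modulo the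
line spanned by `t`: the difference `P * Ψ - Ψ * A` has all its columns in that line, that is, it
is an outer product `t cᵀ`. -/
def RepresentsModLine (t : n → R) (Ψ : Matrix n m R) (P : Matrix n n R) (A : Matrix m m R) :
    Prop :=
  ∃ c, P * Ψ = Ψ * A + vecMulVec t c

namespace RepresentsModLine

variable {t : n → R} {Ψ : Matrix n m R} {P Q : Matrix n n R} {A B : Matrix m m R}

theorem mul (hPt : P *ᵥ t = t) (hA : RepresentsModLine t Ψ P A)
    (hB : RepresentsModLine t Ψ Q B) : RepresentsModLine t Ψ (P * Q) (A * B) := by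
  obtain ⟨c, hc⟩ := hA
  obtain ⟨d, hd⟩ := hB
  refine ⟨c ᵥ* B + d, ?_⟩
  calc P * Q * Ψ = P * Ψ * B + vecMulVec t d := by
        rw [Matrix.mul_assoc, hd, Matrix.mul_add, mul_vecMulVec, hPt, Matrix.mul_assoc]
    _ = Ψ * (A * B) + vecMulVec t (c ᵥ* B + d) := by
        rw [hc, Matrix.add_mul, vecMulVec_mul, vecMulVec_add, Matrix.mul_assoc, add_assoc]

theorem gram_mul (htΨ : t ᵥ* Ψ = 0) (hA : RepresentsModLine t Ψ P A) :
    Ψᵀ * Ψ * A = Ψᵀ * P * Ψ := by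
  obtain ⟨c, hc⟩ := hA
  rw [Matrix.mul_assoc Ψᵀ P, hc, Matrix.mul_add, mul_vecMulVec, mulVec_transpose, htΨ,
    zero_vecMulVec, add_zero, Matrix.mul_assoc]

theorem unique [DecidableEq m] (hΨ : IsUnit (Ψᵀ * Ψ)) (htΨ : t ᵥ* Ψ = 0)
    (hA : RepresentsModLine t Ψ P A) (hB : RepresentsModLine t Ψ P B) : A = B :=
  hΨ.mul_left_cancel ((hA.gram_mul htΨ).trans (hB.gram_mul htΨ).symm)

theorem transpose_mul_gram_mul [DecidableEq n] (hP : Pᵀ * P = 1) (htt : t ⬝ᵥ t = 0)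
    (htΨ : t ᵥ* Ψ = 0) (hA : RepresentsModLine t Ψ P A) : Aᵀ * (Ψᵀ * Ψ) * A = Ψᵀ * Ψ := by
  obtain ⟨c, hc⟩ := id hA
  have htPΨ : t ᵥ* (P * Ψ) = 0 := by
    rw [hc, vecMul_add, ← vecMul_vecMul, htΨ, zero_vecMul, vecMul_vecMulVec, htt, zero_smul,
      add_zero]
  calc Aᵀ * (Ψᵀ * Ψ) * A = (Ψ * A)ᵀ * (P * Ψ) := by
        rw [Matrix.mul_assoc, hA.gram_mul htΨ, transpose_mul, Matrix.mul_assoc, Matrix.mul_assoc]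
    _ = (P * Ψ)ᵀ * (P * Ψ) := by
        rw [hc, transpose_add, Matrix.add_mul, transpose_vecMulVec, ← hc, vecMulVec_mul, htPΨ,
          vecMulVec_zero, add_zero]
    _ = Ψᵀ * Ψ := by
        rw [transpose_mul, Matrix.mul_assoc, ← Matrix.mul_assoc Pᵀ, hP, Matrix.one_mul]

end RepresentsModLine

/-- The columns of `Ψ` form a frame for `t^⊥` modulo the isotropic line spanned by `t ≠ 0`: they
lie in `t^⊥`, their number is `dim t^⊥ - 1`, and their Gram matrix is invertible. -/
structure IsPerpFrame [DecidableEq m] (t : n → R) (Ψ : Matrix n m R) : Prop where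
  isUnit_gram : IsUnit (Ψᵀ * Ψ)
  ne_zero : t ≠ 0
  dotProduct_self : t ⬝ᵥ t = 0
  vecMul_eq_zero : t ᵥ* Ψ = 0
  card_add_two : Fintype.card m + 2 = Fintype.card n

variable [DecidableEq m] {t : n → K} {Ψ : Matrix n m K}

theorem injective_mulVec_add_smul (hΨ : IsUnit (Ψᵀ * Ψ)) (ht : t ≠ 0)
    (htΨ : t ᵥ* Ψ = 0) :
    Function.Injective (Ψ.mulVecLin.coprod (LinearMap.toSpanSingleton K (n → K) t)) := by
  rw [injective_iff_map_eq_zero]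
  rintro ⟨x, c⟩ hxc
  simp only [LinearMap.coprod_apply, mulVecLin_apply, LinearMap.toSpanSingleton_apply] at hxc
  have hgram : (Ψᵀ * Ψ) *ᵥ x = 0 := by
    simpa [mulVec_add, mulVec_smul, mulVec_transpose Ψ t, htΨ] using congrArg (Ψᵀ *ᵥ ·) hxc
  have hx : x = 0 :=
    mulVec_injective_of_isUnit hΨ (hgram.trans (mulVec_zero _).symm)
  have hc : c = 0 := by simpa [hx, ht] using hxc
  rw [hx, hc, Prod.mk_zero_zero]

namespace IsPerpFrame

theorem exists_mulVec_add_smul_eq (h : IsPerpFrame t Ψ) {w : n → K} (hw : t ⬝ᵥ w = 0) :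
    ∃ x, ∃ c : K, Ψ *ᵥ x + c • t = w := by
  classical
  set f := Ψ.mulVecLin.coprod (LinearMap.toSpanSingleton K (n → K) t) with hf
  set φ := dotProductEquiv K n t with hφ
  have hφ_ne : φ ≠ 0 := by simpa [hφ] using h.ne_zero
  have hle : LinearMap.range f ≤ LinearMap.ker φ := by
    rintro _ ⟨⟨x, c⟩, rfl⟩
    simp [hf, hφ, dotProduct_mulVec, h.vecMul_eq_zero, h.dotProduct_self]
  have hrank : Module.finrank K (LinearMap.range f) = Module.finrank K (LinearMap.ker φ) := by
    have hker := Module.Dual.finrank_ker_add_one_of_ne_zero hφ_ne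
    have hcard := h.card_add_two
    rw [LinearMap.finrank_range_of_inj
      (injective_mulVec_add_smul h.isUnit_gram h.ne_zero h.vecMul_eq_zero)]
    simp only [Module.finrank_prod, Module.finrank_fintype_fun_eq_card, Module.finrank_self]
      at hker ⊢
    omega
  obtain ⟨⟨x, c⟩, hxc⟩ :=
    (Submodule.eq_of_le_of_finrank_eq hle hrank).ge (show w ∈ LinearMap.ker φ from hw)
  exact ⟨x, c, hxc⟩

theorem exists_representsModLine (h : IsPerpFrame t Ψ) {P : Matrix n n K} (hPt : t ᵥ* P = t) :
    ∃ A, RepresentsModLine t Ψ P A := by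
  have hcol : ∀ j, t ⬝ᵥ (P * Ψ).col j = 0 := fun j =>
    congrFun (show t ᵥ* (P * Ψ) = 0 by rw [← vecMul_vecMul, hPt, h.vecMul_eq_zero]) j
  choose x c hxc using fun j => h.exists_mulVec_add_smul_eq (hcol j)
  refine ⟨(Matrix.of x)ᵀ, c, ?_⟩
  ext k j
  simpa [mul_apply, mulVec, dotProduct, vecMulVec_apply, mul_comm (c j)]
    using (congrFun (hxc j) k).symm

theorem exists_mulVec_sub_mulVec_eq_smul (h : IsPerpFrame t Ψ) {P Q : Matrix n n K}
    {A : Matrix m m K} (hPt : P *ᵥ t = t) (hQt : Q *ᵥ t = t) (hP : RepresentsModLine t Ψ P A)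
    (hQ : RepresentsModLine t Ψ Q A) {w : n → K} (hw : t ⬝ᵥ w = 0) :
    ∃ e : K, P *ᵥ w - Q *ᵥ w = e • t := by
  obtain ⟨c, hc⟩ := hP
  obtain ⟨d, hd⟩ := hQ
  obtain ⟨x, a, rfl⟩ := h.exists_mulVec_add_smul_eq hw
  refine ⟨c ⬝ᵥ x - d ⬝ᵥ x, ?_⟩
  simp only [mulVec_add, mulVec_smul, mulVec_mulVec, hPt, hQt, hc, hd, add_mulVec,
    vecMulVec_mulVec, op_smul_eq_smul, sub_smul]
  abel

end IsPerpFrame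

end ModLine

section Omega

variable {g : ℕ} {R : Type} [CommRing R]

/-- The other index in the `2×2` diagonal block containing `i`. -/
def blockPartner (i : Fin (2 * g)) : Fin (2 * g) :=
  ⟨if (i : ℕ) % 2 = 0 then i + 1 else i - 1, by split_ifs <;> omega⟩

theorem blockPartner_involutive : Function.Involutive (blockPartner (g := g)) := by
  intro i
  ext
  simp only [blockPartner]
  split_ifs <;> omega

theorem blockPartner_mod_two_eq_zero_iff (i : Fin (2 * g)) :
    (blockPartner i : ℕ) % 2 = 0 ↔ ¬ (i : ℕ) % 2 = 0 := by
  simp only [blockPartner]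
  split_ifs <;> omega

theorem omegaMat_apply (i j : Fin (2 * g)) :
    OmegaMat g R i j = if blockPartner i = j then (if (i : ℕ) % 2 = 0 then 1 else -1) else 0 := by
  simp only [OmegaMat, of_apply, blockPartner, Fin.ext_iff]
  split_ifs <;> first | rfl | omega

theorem omegaMat_mul_self : OmegaMat g R * OmegaMat g R = -1 := by
  ext i j
  simp only [mul_apply, omegaMat_apply, ite_mul, zero_mul, Finset.sum_ite_eq, Finset.mem_univ,
    if_true, blockPartner_involutive i, blockPartner_mod_two_eq_zero_iff, Matrix.neg_apply,
    Matrix.one_apply]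
  split_ifs <;> simp

theorem isUnit_omegaMat : IsUnit (OmegaMat g R) :=
  IsUnit.of_mul_eq_one (-OmegaMat g R) (by rw [mul_neg, omegaMat_mul_self, neg_neg])

end Omega

section InitialSegment

/-- The indicator vector `e₀ + ⋯ + e_{a-1}` of the first `a` coordinates. -/
def initialSegment (N a : ℕ) (R : Type*) [Zero R] [One R] : Fin N → R :=
  fun k => if (k : ℕ) < a then 1 else 0

theorem initialSegment_dotProduct_initialSegment {N a b : ℕ} {R : Type*} [NonAssocSemiring R] :
    initialSegment N a R ⬝ᵥ initialSegment N b R = (min N (min a b) : ℕ) := by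
  simp only [dotProduct, initialSegment, ← ite_and, ← lt_min_iff, mul_ite, mul_one, mul_zero,
    Finset.sum_boole, Fin.card_filter_val_lt, min_comm b]

end InitialSegment

section Frame

variable {g : ℕ}

theorem tvec_eq_initialSegment : tvec g = initialSegment (2 * g + 2) (2 * g + 2) (ZMod 2) := by
  ext k
  simp [tvec, initialSegment]

theorem psiMat_col_of_even {j : Fin (2 * g)} (hj : (j : ℕ) % 2 = 0) :
    (PsiMat g).col j = initialSegment _ (j + 2) (ZMod 2) := by
  ext k
  simp [PsiMat, initialSegment, hj]

theorem psiMat_col_of_odd {j : Fin (2 * g)} (hj : (j : ℕ) % 2 = 1) :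
    (PsiMat g).col j = initialSegment _ j (ZMod 2) + Pi.single ⟨j + 1, by omega⟩ 1 := by
  ext k
  simp only [PsiMat, of_apply, col_apply, hj, one_ne_zero, if_false, Pi.add_apply,
    initialSegment, Pi.single_apply, Fin.ext_iff]
  split_ifs <;> first | omega | simp

theorem tvec_vecMul_psiMat : tvec g ᵥ* PsiMat g = 0 := by
  ext j
  change tvec g ⬝ᵥ (PsiMat g).col j = 0
  rw [tvec_eq_initialSegment]
  have hj_lt : (j : ℕ) + 1 < 2 * g + 2 := by omega
  rcases Nat.mod_two_eq_zero_or_one j with hj | hj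
  · rw [psiMat_col_of_even hj, initialSegment_dotProduct_initialSegment,
      ZMod.natCast_eq_zero_iff_even, Nat.even_iff]
    omega
  · rw [psiMat_col_of_odd hj, dotProduct_add, initialSegment_dotProduct_initialSegment,
      dotProduct_single, mul_one, initialSegment, if_pos hj_lt]
    norm_cast
    rw [ZMod.natCast_eq_zero_iff_even, Nat.even_iff]
    omega

theorem transpose_psiMat_mul_psiMat : (PsiMat g)ᵀ * PsiMat g = OmegaMat g (ZMod 2) := by
  ext ⟨i, hi_lt⟩ ⟨j, hj_lt⟩
  change (PsiMat g).col ⟨i, hi_lt⟩ ⬝ᵥ (PsiMat g).col ⟨j, hj_lt⟩ = _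
  rcases Nat.mod_two_eq_zero_or_one i with hi | hi <;>
    rcases Nat.mod_two_eq_zero_or_one j with hj | hj
  all_goals
    simp only [psiMat_col_of_even, psiMat_col_of_odd, hi, hj, dotProduct_add, add_dotProduct,
      initialSegment_dotProduct_initialSegment, dotProduct_single, single_dotProduct, one_mul,
      mul_one, Pi.add_apply, initialSegment, Pi.single_apply, Fin.mk.injEq]
    simp only [OmegaMat, of_apply, ZMod.neg_eq_self_mod_two]
    -- Both sides are casts of explicit natural numbers, so only parities have to be compared.
    norm_cast
    rw [ZMod.natCast_eq_natCast_iff']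
    split_ifs <;> omega

theorem tvec_dotProduct (w : Fin (2 * g + 2) → ZMod 2) : tvec g ⬝ᵥ w = ∑ i, w i :=
  one_dotProduct w

theorem tvec_dotProduct_tvec : tvec g ⬝ᵥ tvec g = 0 := by
  rw [tvec_eq_initialSegment, initialSegment_dotProduct_initialSegment,
    ZMod.natCast_eq_zero_iff_even, Nat.even_iff]
  omega

theorem isPerpFrame_psiMat : IsPerpFrame (tvec g) (PsiMat g) where
  isUnit_gram := by
    rw [transpose_psiMat_mul_psiMat]
    exact isUnit_omegaMat
  ne_zero h := one_ne_zero (congrFun h 0)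
  dotProduct_self := tvec_dotProduct_tvec
  vecMul_eq_zero := tvec_vecMul_psiMat
  card_add_two := by simp only [Fintype.card_fin]

variable {σ τ : Equiv.Perm (Fin (2 * g + 2))}

theorem permMat_eq_permMatrixHom : permMat g σ = permMatrixHom σ := by
  ext k j
  simp [permMat, PEquiv.toMatrix_apply, Equiv.eq_symm_apply, eq_comm]

theorem permMat_mul : permMat g (σ * τ) = permMat g σ * permMat g τ := by
  simp only [permMat_eq_permMatrixHom, map_mul]

theorem transpose_permMat_mul_permMat : (permMat g σ)ᵀ * permMat g σ = 1 := by
  simp [permMat_eq_permMatrixHom, ← permMatrix_mul]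

theorem permMat_mulVec (w : Fin (2 * g + 2) → ZMod 2) : permMat g σ *ᵥ w = w ∘ σ.symm := by
  simp [permMat_eq_permMatrixHom, permMatrix_mulVec]

theorem permMat_mulVec_tvec : permMat g σ *ᵥ tvec g = tvec g := by
  rw [permMat_mulVec]
  rfl

theorem tvec_vecMul_permMat : tvec g ᵥ* permMat g σ = tvec g := by
  rw [permMat_eq_permMatrixHom, permMatrixHom_apply, vecMul_permMatrix]
  rfl

theorem representsPerm_iff {A : Matrix (Fin (2 * g)) (Fin (2 * g)) (ZMod 2)} :
    representsPerm g A σ ↔ RepresentsModLine (tvec g) (PsiMat g) (permMat g σ) A := by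
  simp only [representsPerm, tline, Submodule.mem_span_singleton, RepresentsModLine,
    Classical.skolem, funext_iff, ← Matrix.ext_iff, Matrix.add_apply, Matrix.sub_apply,
    vecMulVec_apply, Pi.smul_apply, smul_eq_mul, mul_comm (tvec g _), CharTwo.sub_eq_add,
    CharTwo.eq_add_iff_add_eq, add_comm (_ * _)]
  exact exists_congr fun c => forall_comm

theorem exists_representsPerm (σ : Equiv.Perm (Fin (2 * g + 2))) :
    ∃ A : Matrix (Fin (2 * g)) (Fin (2 * g)) (ZMod 2), representsPerm g A σ := by
  simp only [representsPerm_iff]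
  exact isPerpFrame_psiMat.exists_representsModLine tvec_vecMul_permMat

variable {A B : Matrix (Fin (2 * g)) (Fin (2 * g)) (ZMod 2)}

theorem representsPerm.transpose_mul_omegaMat_mul (hA : representsPerm g A σ) :
    Aᵀ * OmegaMat g (ZMod 2) * A = OmegaMat g (ZMod 2) := by
  rw [← transpose_psiMat_mul_psiMat]
  exact (representsPerm_iff.1 hA).transpose_mul_gram_mul transpose_permMat_mul_permMat
    tvec_dotProduct_tvec tvec_vecMul_psiMat

theorem representsPerm.unique (hA : representsPerm g A σ) (hB : representsPerm g B σ) : A = B :=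
  (representsPerm_iff.1 hA).unique isPerpFrame_psiMat.isUnit_gram tvec_vecMul_psiMat
    (representsPerm_iff.1 hB)

theorem representsPerm.mul (hA : representsPerm g A σ) (hB : representsPerm g B τ) :
    representsPerm g (A * B) (σ * τ) := by
  rw [representsPerm_iff, permMat_mul]
  exact (representsPerm_iff.1 hA).mul permMat_mulVec_tvec (representsPerm_iff.1 hB)

theorem representsPerm.perm_unique (hg : 2 ≤ g) (hσ : representsPerm g A σ)
    (hτ : representsPerm g A τ) : σ = τ := by
  suffices hsymm : σ.symm = τ.symm from Equiv.symm_bijective.injective hsymm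
  refine perm_eq_of_forall_comp_sub_comp_const (R := ZMod 2)
    (by rw [Fintype.card_fin]; omega) fun w hw => ?_
  obtain ⟨c, hc⟩ := isPerpFrame_psiMat.exists_mulVec_sub_mulVec_eq_smul permMat_mulVec_tvec
    permMat_mulVec_tvec (representsPerm_iff.1 hσ) (representsPerm_iff.1 hτ)
    ((tvec_dotProduct w).trans hw)
  refine ⟨c, fun i => ?_⟩
  simpa [permMat_mulVec, tvec] using congrFun hc i

end Frame

/-- For every `g ≥ 2`, the homomorphism `S_{2g+2} → Sp_{2g}(ℤ/2ℤ)` induced by the permutation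
action of `S_{2g+2}` on the coordinates of `V = (ℤ/2ℤ)^{2g+2}`, descended to
`W = t^⊥/span(t)`, is injective: `S_{2g+2}` embeds as a subgroup of `Sp_{2g}(ℤ/2ℤ)`.
Concretely: every permutation is represented by a symplectic matrix, the representing matrix
is unique, the assignment is multiplicative, and distinct permutations have distinct
representing matrices (equivalently, a matrix represents at most one permutation). -/
theorem maximal_monodromy_stmt0 (g : ℕ) (hg : 2 ≤ g) :
    (∀ σ : Equiv.Perm (Fin (2*g+2)), ∃ A : Matrix (Fin (2*g)) (Fin (2*g)) (ZMod 2),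
        Aᵀ * OmegaMat g (ZMod 2) * A = OmegaMat g (ZMod 2) ∧ representsPerm g A σ) ∧
    (∀ (σ : Equiv.Perm (Fin (2*g+2))) (A B : Matrix (Fin (2*g)) (Fin (2*g)) (ZMod 2)),
        representsPerm g A σ → representsPerm g B σ → A = B) ∧
    (∀ (σ τ : Equiv.Perm (Fin (2*g+2))) (A B : Matrix (Fin (2*g)) (Fin (2*g)) (ZMod 2)),
        representsPerm g A σ → representsPerm g B τ → representsPerm g (A * B) (σ * τ)) ∧
    (∀ (σ τ : Equiv.Perm (Fin (2*g+2))) (A : Matrix (Fin (2*g)) (Fin (2*g)) (ZMod 2)),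
        representsPerm g A σ → representsPerm g A τ → σ = τ) := by
  refine ⟨fun σ => ?_, fun _ _ _ hA hB => hA.unique hB, fun _ _ _ _ hA hB => hA.mul hB,
    fun _ _ _ hσ hτ => hσ.perm_unique hg hτ⟩
  obtain ⟨A, hA⟩ := exists_representsPerm σ
  exact ⟨A, hA.transpose_mul_omegaMat_mul, hA⟩
end

section
/- Let g ≥ 2 and let H ⊆ GSp_{2g}(ℤ_2) be a subgroup such that H equals the full preimage under mod-2 reduction of its mod-2 image H(2), and such that H(2) contains the embedded copy of S_{2g+1}. Then the closure of the commutator subgroup of H equals the full preimage of the commutator subgroup [H(2),H(2)] under the reduction map Sp_{2g}(ℤ_2) → Sp_{2g}(ℤ/2ℤ). -/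
open Matrix

/-- Entrywise mod-2 reduction `GL_{2g}(ℤ_2) → GL_{2g}(ℤ/2ℤ)`. -/
noncomputable def redMod2 (g : ℕ) : GL (Fin (2*g)) ℤ_[2] →* GL (Fin (2*g)) (ZMod 2) :=
  Units.map ((PadicInt.toZMod).mapMatrix.toMonoidHom)

/-!
Filter `GL_n(ℤ_p)` by the congruence subgroups. Successive approximation shows that a subgroup `K`
of a closed subgroup `G` is dense in `G` as soon as the two have the same reduction mod `p` and
the same graded pieces `{Y mod p | 1 + p ^ (k + 1) Y ∈ K}`.

For the preimage `G` of `[H(2), H(2)]` in `Sp_{2g}(ℤ_2)`, the graded pieces lie in the Lie algebra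
`𝔰𝔭_{2g}(𝔽_2)`, which consists of the products `S Ω` with `S` symmetric. The map `ψ` identifies
`𝔽_2^{2g}` with the sum-zero vectors of `𝔽_2^{2g+1}`, hence such matrices `S` with the symmetric
matrices with zero row sums, and these are combinations of edge Laplacians
`(e_a - e_b)(e_a - e_b)ᵀ`. So if `ψ` sends `f_{ab}` to `e_a - e_b`, the Lie algebra is spanned by
the `N_{f_{ab}}`, where `N_v = v vᵀ Ω` is the logarithm of the transvection along `v`. The
transvection along `f_{ab}` is the transposition `(a b) ∈ S_{2g+1}`.

It remains to find each `N_{f_{ab}}` in each graded piece of `[H, H]`. The similitude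
`δ = diag(1, -1, 1, -1, …)` reduces to `1` mod 2, so it lies in `H`. It has multiplier `-1` and
fixes `e_0`, hence it inverts the transvections along `e_0`, and
`[δ, 1 - 2 ^ k N_{e_0}] = 1 + 2 ^ (k + 1) N_{e_0}`. Here `e_0` reduces to some `f_{ab}`, and
conjugation by lifts of transpositions to `H` produces the others.
-/

namespace MaximalMonodromy

section CongruenceFiltration

variable {p : ℕ} [Fact p.Prime] {n : Type*} [Fintype n] [DecidableEq n]

/-- Entrywise reduction `M_n(ℤ_p) → M_n(ℤ/pℤ)` of arbitrary square matrices. -/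
noncomputable abbrev matReduction : Matrix n n ℤ_[p] →+* Matrix n n (ZMod p) :=
  PadicInt.toZMod.mapMatrix

/-- Entrywise reduction `GL_n(ℤ_p) → GL_n(ℤ/pℤ)`. -/
noncomputable abbrev glReduction : GL n ℤ_[p] →* GL n (ZMod p) :=
  GeneralLinearGroup.map PadicInt.toZMod

lemma coe_glReduction (x : GL n ℤ_[p]) :
    (glReduction x : Matrix n n (ZMod p)) = matReduction (x : Matrix n n ℤ_[p]) :=
  rfl

lemma matReduction_prime_pow_smul (k : ℕ) (A : Matrix n n ℤ_[p]) :
    matReduction ((p : ℤ_[p]) ^ (k + 1) • A) = 0 := by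
  ext i j
  simp

lemma exists_eq_prime_smul_of_matReduction_eq_zero {A : Matrix n n ℤ_[p]}
    (hA : matReduction A = 0) : ∃ N, A = (p : ℤ_[p]) • N := by
  have entry_dvd (i j : n) : ∃ c, A i j = p * c := by
    have hker : A i j ∈ RingHom.ker (PadicInt.toZMod (p := p)) := congrFun (congrFun hA i) j
    rwa [PadicInt.ker_toZMod, PadicInt.maximalIdeal_eq_span_p, Ideal.mem_span_singleton] at hker
  choose N hN using entry_dvd
  exact ⟨Matrix.of N, Matrix.ext hN⟩

lemma coe_inv_eq_one_add_smul {R : Type*} [CommRing R] {x : GL n R} {q : R} {Y : Matrix n n R}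
    (hx : (x : Matrix n n R) = 1 + q • Y) :
    ((x⁻¹ : GL n R) : Matrix n n R) = 1 + q • -((x⁻¹ : GL n R) * Y) := by
  have hinv : ((x⁻¹ : GL n R) : Matrix n n R) * (1 + q • Y) = 1 := by rw [← hx, Units.inv_mul]
  rw [mul_add, mul_one, mul_smul_comm] at hinv
  rw [smul_neg, ← hinv, add_neg_cancel_right]

lemma glReduction_eq_one_of_eq_one_add {x : GL n ℤ_[p]} {k : ℕ}
    {Y : Matrix n n ℤ_[p]}
    (hx : (x : Matrix n n ℤ_[p]) = 1 + (p : ℤ_[p]) ^ (k + 1) • Y) : glReduction x = 1 := by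
  ext1
  rw [coe_glReduction, hx, map_add, map_one, matReduction_prime_pow_smul, add_zero, Units.val_one]

/-- The `k`-th graded piece of `K ≤ GL_n(ℤ_p)` for the congruence filtration: the reductions
mod `p` of those `Y` for which `1 + p ^ (k + 1) Y` lies in `K`. -/
def congruenceGraded (K : Subgroup (GL n ℤ_[p])) (k : ℕ) : AddSubgroup (Matrix n n (ZMod p)) where
  carrier := {C | ∃ x ∈ K, ∃ Y : Matrix n n ℤ_[p],
    (x : Matrix n n ℤ_[p]) = 1 + (p : ℤ_[p]) ^ (k + 1) • Y ∧ matReduction Y = C}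
  zero_mem' := ⟨1, K.one_mem, 0, by simp, map_zero _⟩
  add_mem' := by
    rintro _ _ ⟨x, hxK, Y, hx, rfl⟩ ⟨y, hyK, Z, hy, rfl⟩
    refine ⟨x * y, K.mul_mem hxK hyK, Y + Z + (p : ℤ_[p]) ^ (k + 1) • (Y * Z), ?_, ?_⟩
    · simp only [Units.val_mul, hx, hy, mul_add, add_mul, one_mul, mul_one, smul_mul_smul_comm,
        smul_add, smul_smul]
      abel
    · rw [map_add, map_add, matReduction_prime_pow_smul, add_zero]
  neg_mem' := by
    rintro _ ⟨x, hxK, Y, hx, rfl⟩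
    refine ⟨x⁻¹, K.inv_mem hxK, _, coe_inv_eq_one_add_smul hx, ?_⟩
    rw [map_neg, map_mul, ← coe_glReduction, map_inv, glReduction_eq_one_of_eq_one_add hx, inv_one,
      Units.val_one, one_mul]

lemma conj_mem_congruenceGraded {K : Subgroup (GL n ℤ_[p])} {k : ℕ} {C : Matrix n n (ZMod p)}
    {h : GL n ℤ_[p]} (hh : h ∈ Subgroup.normalizer (K : Set (GL n ℤ_[p])))
    (hC : C ∈ congruenceGraded K k) :
    (glReduction h : Matrix n n (ZMod p)) * C * ((glReduction h)⁻¹ : GL n (ZMod p)) ∈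
      congruenceGraded K k := by
  obtain ⟨x, hxK, Y, hx, rfl⟩ := hC
  refine ⟨h * x * h⁻¹, (Subgroup.mem_normalizer_iff.1 hh x).1 hxK,
    h * Y * (h⁻¹ : GL n ℤ_[p]), ?_, ?_⟩
  · rw [Units.val_mul, Units.val_mul, hx, mul_add, mul_one, add_mul, Units.mul_inv,
      mul_smul_comm, smul_mul_assoc]
  · rw [map_mul, map_mul, ← map_inv, coe_glReduction, coe_glReduction]

variable {K G : Subgroup (GL n ℤ_[p])}

lemma exists_coe_inv_mul_eq_one_add (hKG : K ≤ G)
    (hmap : G.map glReduction ≤ K.map glReduction)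
    (hgraded : ∀ k, congruenceGraded G k ≤ congruenceGraded K k) {x : GL n ℤ_[p]} (hx : x ∈ G)
    (k : ℕ) : ∃ y ∈ K, ∃ A : Matrix n n ℤ_[p],
      ((y⁻¹ * x : GL n ℤ_[p]) : Matrix n n ℤ_[p]) = 1 + (p : ℤ_[p]) ^ (k + 1) • A := by
  induction k with
  | zero =>
    obtain ⟨y, hyK, hyx⟩ := hmap ⟨x, hx, rfl⟩
    have hred : glReduction (y⁻¹ * x) = 1 := by rw [map_mul, map_inv, hyx, inv_mul_cancel]
    obtain ⟨A, hA⟩ := exists_eq_prime_smul_of_matReduction_eq_zero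
      (A := ((y⁻¹ * x : GL n ℤ_[p]) : Matrix n n ℤ_[p]) - 1)
      (by rw [map_sub, ← coe_glReduction, hred, Units.val_one, map_one, sub_self])
    exact ⟨y, hyK, A, by rw [zero_add, pow_one, ← hA, add_sub_cancel]⟩
  | succ k ih =>
    obtain ⟨y, hyK, A, hA⟩ := ih
    have hyxG : y⁻¹ * x ∈ G := G.mul_mem (G.inv_mem (hKG hyK)) hx
    obtain ⟨z, hzK, Y, hz, hYA⟩ := hgraded k ⟨_, hyxG, A, hA, rfl⟩
    obtain ⟨N, hN⟩ := exists_eq_prime_smul_of_matReduction_eq_zero (A := A - Y)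
      (by rw [map_sub, hYA, sub_self])
    have hsplit : ((y⁻¹ * x : GL n ℤ_[p]) : Matrix n n ℤ_[p]) =
        z + (p : ℤ_[p]) ^ (k + 1 + 1) • N := by
      rw [hA, hz, pow_succ _ (k + 1), mul_smul, ← hN, smul_sub]
      abel
    refine ⟨y * z, K.mul_mem hyK hzK, (z⁻¹ : GL n ℤ_[p]) * N, ?_⟩
    rw [_root_.mul_inv_rev, mul_assoc, Units.val_mul, hsplit, mul_add, Units.inv_mul, mul_smul_comm]

omit [Fintype n] in
lemma tendsto_one_add_prime_pow_smul (A : ℕ → Matrix n n ℤ_[p]) :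
    Filter.Tendsto (fun k => 1 + (p : ℤ_[p]) ^ (k + 1) • A k) Filter.atTop (nhds 1) := by
  suffices Filter.Tendsto (fun k => (p : ℤ_[p]) ^ (k + 1) • A k) Filter.atTop (nhds 0) by
    simpa only [add_zero] using tendsto_const_nhds.add this
  have hp : Filter.Tendsto (fun k : ℕ => ‖(p : ℤ_[p])‖ ^ (k + 1)) Filter.atTop (nhds 0) :=
    (tendsto_pow_atTop_nhds_zero_of_lt_one (norm_nonneg _)
      (PadicInt.mem_nonunits.1 PadicInt.p_nonunit)).comp (Filter.tendsto_add_atTop_nat 1)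
  refine tendsto_pi_nhds.2 fun i => tendsto_pi_nhds.2 fun j => squeeze_zero_norm (fun k => ?_) hp
  rw [Matrix.smul_apply, smul_eq_mul, norm_mul, norm_pow]
  exact mul_le_of_le_one_right (by positivity) (PadicInt.norm_le_one _)

lemma tendsto_one_of_eq_one_add_prime_pow_smul {x : ℕ → GL n ℤ_[p]} {A : ℕ → Matrix n n ℤ_[p]}
    (hx : ∀ k, (x k : Matrix n n ℤ_[p]) = 1 + (p : ℤ_[p]) ^ (k + 1) • A k) :
    Filter.Tendsto x Filter.atTop (nhds 1) := by
  rw [Units.isInducing_embedProduct.tendsto_nhds_iff, map_one, Prod.one_eq_mk, nhds_prod_eq]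
  refine Filter.Tendsto.prodMk ?_ ((MulOpposite.continuous_op.tendsto 1).comp ?_)
  · exact (tendsto_one_add_prime_pow_smul A).congr fun k => (hx k).symm
  · exact (tendsto_one_add_prime_pow_smul _).congr fun k => (coe_inv_eq_one_add_smul (hx k)).symm

theorem closure_eq_of_congruenceGraded_le (hG : IsClosed (G : Set (GL n ℤ_[p]))) (hKG : K ≤ G)
    (hmap : G.map glReduction ≤ K.map glReduction)
    (hgraded : ∀ k, congruenceGraded G k ≤ congruenceGraded K k) :
    closure (K : Set (GL n ℤ_[p])) = G := by
  refine (closure_minimal hKG hG).antisymm fun x hx => ?_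
  choose y hyK A hA using exists_coe_inv_mul_eq_one_add hKG hmap hgraded hx
  have hlim : Filter.Tendsto y Filter.atTop (nhds x) := by
    simpa only [_root_.mul_inv_rev, inv_inv, mul_inv_cancel_left, inv_one, mul_one] using
      (tendsto_one_of_eq_one_add_prime_pow_smul hA).inv.const_mul x
  exact mem_closure_of_tendsto hlim (.of_forall hyK)

lemma continuous_toZMod : Continuous (PadicInt.toZMod (p := p)) := by
  refine continuous_of_continuousAt_zero _ ?_
  rw [ContinuousAt, map_zero, nhds_discrete (ZMod p), Filter.tendsto_pure]
  filter_upwards [Metric.ball_mem_nhds (0 : ℤ_[p]) one_pos] with x hx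
  rwa [← RingHom.mem_ker, PadicInt.ker_toZMod, IsLocalRing.mem_maximalIdeal, PadicInt.mem_nonunits,
    ← mem_ball_zero_iff]

lemma isClosed_comap_glReduction (P : Subgroup (GL n (ZMod p))) :
    IsClosed (P.comap glReduction : Set (GL n ℤ_[p])) := by
  have : DiscreteTopology (GL n (ZMod p)) := inferInstance
  exact (isClosed_discrete _).preimage continuous_toZMod.generalLinearGroup_map

lemma isSkewAdjoint_of_mem_congruenceGraded {J : Matrix n n ℤ_[p]} {k : ℕ}
    {C : Matrix n n (ZMod p)} (hJ : ∀ x ∈ K, (x : Matrix n n ℤ_[p])ᵀ * J * x = J)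
    (hC : C ∈ congruenceGraded K k) : (matReduction J).IsSkewAdjoint C := by
  obtain ⟨x, hxK, Y, hx, rfl⟩ := hC
  set q := (p : ℤ_[p]) ^ (k + 1)
  have hq0 : q ≠ 0 := pow_ne_zero _ (mod_cast (Fact.out : p.Prime).ne_zero)
  have hexpand : q • (Yᵀ * J + J * Y + q • (Yᵀ * J * Y)) = 0 := by
    rw [← sub_eq_zero.2 (hJ x hxK), hx]
    simp only [transpose_add, transpose_one, transpose_smul, mul_add, add_mul, one_mul, mul_one,
      smul_mul_assoc, mul_smul_comm, smul_add]
    abel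
  have hred := congrArg matReduction ((smul_eq_zero.1 hexpand).resolve_left hq0)
  rw [map_add, map_add, matReduction_prime_pow_smul, add_zero, map_zero, map_mul, map_mul] at hred
  rw [Matrix.IsSkewAdjoint, Matrix.IsAdjointPair, mul_neg]
  exact eq_neg_of_add_eq_zero_left hred

end CongruenceFiltration

section Symplectic

open scoped commutatorElement

lemma dotProduct_mulVec_self_eq_zero {n R : Type*} [Fintype n] [CommRing R] {M : Matrix n n R}
    (hskew : Mᵀ = -M) (hdiag : ∀ i, M i i = 0) (v : n → R) : v ⬝ᵥ M *ᵥ v = 0 := by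
  simp only [dotProduct, mulVec, Finset.mul_sum]
  rw [← Finset.sum_product']
  refine Finset.sum_involution (fun ij _ => ij.swap) (fun ij _ => ?_) (fun ij _ hne heq => hne ?_)
    (fun _ _ => Finset.mem_univ _) fun ij _ => ij.swap_swap
  · have hswap : M ij.2 ij.1 = -M ij.1 ij.2 := congrFun (congrFun hskew ij.1) ij.2
    simp only [Prod.fst_swap, Prod.snd_swap, hswap]
    ring
  · have : ij.2 = ij.1 := congrArg Prod.fst heq
    rw [this, hdiag, zero_mul, mul_zero]

lemma eq_of_transpose_mul_mul_eq {n R : Type*} [Fintype n] [DecidableEq n] [CommRing R]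
    {A B : Matrix n n R} (w : GL n R)
    (h : (w : Matrix n n R)ᵀ * A * w = (w : Matrix n n R)ᵀ * B * w) : A = B := by
  have hw : IsUnit (w : Matrix n n R)ᵀ := (isUnit_transpose _).2 w.isUnit
  exact hw.mul_left_cancel (w.isUnit.mul_right_cancel h)

lemma transpose_mul_mul_mul {n R : Type*} [Fintype n] [CommRing R] (x y J : Matrix n n R) :
    (x * y)ᵀ * J * (x * y) = yᵀ * (xᵀ * J * x) * y := by
  simp only [transpose_mul, mul_assoc]

variable {g : ℕ} {R : Type} [CommRing R]

/-- The index paired with `i` by the `2 × 2` blocks of `OmegaMat`. -/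
def partner (i : Fin (2 * g)) : Fin (2 * g) :=
  ⟨if (i : ℕ) % 2 = 0 then i + 1 else i - 1, by grind⟩

/-- The sign `(-1) ^ i`, which is also the nonzero entry in row `i` of `OmegaMat`. -/
def blockSign (R : Type) [CommRing R] (i : Fin (2 * g)) : R :=
  if (i : ℕ) % 2 = 0 then 1 else -1

lemma blockSign_mul_self (i : Fin (2 * g)) : blockSign R i * blockSign R i = 1 := by
  grind [blockSign]

lemma blockSign_partner (i : Fin (2 * g)) : blockSign R (partner i) = -blockSign R i := by
  grind [blockSign, partner]

lemma partner_partner (i : Fin (2 * g)) : partner (partner i) = i := by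
  grind [partner]

lemma OmegaMat_apply (i j : Fin (2 * g)) :
    OmegaMat g R i j = if j = partner i then blockSign R i else 0 := by
  simp only [OmegaMat, of_apply, blockSign, partner, Fin.ext_iff]
  grind

lemma transpose_OmegaMat : (OmegaMat g R)ᵀ = -OmegaMat g R := by
  ext i j
  simp only [transpose_apply, Matrix.neg_apply, OmegaMat_apply]
  grind [partner_partner, blockSign_partner]

lemma OmegaMat_mul_self : OmegaMat g R * OmegaMat g R = -1 := by
  ext i j
  simp only [mul_apply, OmegaMat_apply, ite_mul, zero_mul, Finset.sum_ite_eq', Finset.mem_univ,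
    if_true, partner_partner, blockSign_partner, Matrix.neg_apply, one_apply]
  grind [blockSign_mul_self]

lemma isSymm_mul_OmegaMat_of_isSkewAdjoint {C : Matrix (Fin (2 * g)) (Fin (2 * g)) R}
    (hC : (OmegaMat g R).IsSkewAdjoint C) : (C * OmegaMat g R).IsSymm := by
  have hCΩ : Cᵀ * OmegaMat g R = OmegaMat g R * -C := hC
  rw [IsSymm, transpose_mul, transpose_OmegaMat]
  calc -OmegaMat g R * Cᵀ
      = OmegaMat g R * (Cᵀ * OmegaMat g R) * OmegaMat g R := by
        rw [mul_assoc, mul_assoc, OmegaMat_mul_self, mul_neg_one, mul_neg, neg_mul]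
    _ = C * OmegaMat g R := by
        rw [hCΩ, ← mul_assoc, OmegaMat_mul_self, neg_one_mul, neg_neg]

lemma dotProduct_OmegaMat_mulVec_self (v : Fin (2 * g) → R) : v ⬝ᵥ OmegaMat g R *ᵥ v = 0 :=
  dotProduct_mulVec_self_eq_zero transpose_OmegaMat
    (fun i => by simp only [OmegaMat, of_apply]; grind) v

lemma mapMatrix_OmegaMat {S : Type} [CommRing S] (f : R →+* S) :
    f.mapMatrix (OmegaMat g R) = OmegaMat g S := by
  ext i j
  simp only [RingHom.mapMatrix_apply, map_apply, OmegaMat, of_apply]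
  split_ifs <;> simp only [map_one, map_neg, map_zero]

/-- `SpSet g R` as a subgroup of `GL_{2g}(R)`. -/
def spSubgroup (g : ℕ) (R : Type) [CommRing R] : Subgroup (GL (Fin (2 * g)) R) where
  carrier := SpSet g R
  one_mem' := by simp [SpSet]
  mul_mem' {x y} hx hy := by
    simp only [SpSet, Set.mem_ofPred_eq] at hx hy ⊢
    rw [Units.val_mul, transpose_mul_mul_mul, hx, hy]
  inv_mem' {x} hx := eq_of_transpose_mul_mul_eq x <| by
    simp only [SpSet, Set.mem_ofPred_eq] at hx
    rw [← transpose_mul_mul_mul, Units.inv_mul, transpose_one, one_mul, mul_one, hx]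

lemma spSubgroup_subset_GSpSet : (spSubgroup g R : Set (GL (Fin (2 * g)) R)) ⊆ GSpSet g R :=
  fun _ hx => ⟨1, by rw [Units.val_one, one_smul]; exact hx⟩

lemma mem_spSubgroup {x : GL (Fin (2 * g)) R} : x ∈ spSubgroup g R ↔
    (x : Matrix (Fin (2 * g)) (Fin (2 * g)) R)ᵀ * OmegaMat g R * x = OmegaMat g R :=
  Iff.rfl

-- `⁅x, y⁆` carries `y * x` to `x * y`, and both have the same multiplier.
lemma commutatorElement_mem_spSubgroup {x y : GL (Fin (2 * g)) R} (hx : x ∈ GSpSet g R)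
    (hy : y ∈ GSpSet g R) : ⁅x, y⁆ ∈ spSubgroup g R := by
  obtain ⟨m, hm⟩ := hx
  obtain ⟨n, hn⟩ := hy
  refine mem_spSubgroup.2 (eq_of_transpose_mul_mul_eq (y * x) ?_)
  have hcomm : ⁅x, y⁆ * (y * x) = x * y := by rw [commutatorElement_def]; group
  rw [← transpose_mul_mul_mul, ← Units.val_mul ⁅x, y⁆, hcomm, Units.val_mul, Units.val_mul,
    transpose_mul_mul_mul, transpose_mul_mul_mul, hm, hn]
  simp only [mul_smul_comm, smul_mul_assoc, hm, hn, smul_smul, mul_comm]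

lemma commutator_le_spSubgroup {H : Subgroup (GL (Fin (2 * g)) R)}
    (hH : (H : Set (GL (Fin (2 * g)) R)) ⊆ GSpSet g R) : ⁅H, H⁆ ≤ spSubgroup g R :=
  Subgroup.commutator_le.2 fun _ hx _ hy => commutatorElement_mem_spSubgroup (hH hx) (hH hy)

lemma isClosed_spSubgroup [TopologicalSpace R] [IsTopologicalRing R] [T2Space R] :
    IsClosed (spSubgroup g R : Set (GL (Fin (2 * g)) R)) :=
  isClosed_eq (by fun_prop) continuous_const

/-- The endomorphism `w ↦ (vᵀ Ω w) v`, for which `1 + c • transvectionLog v` is the symplectic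
transvection along `v`. Through `S ↦ S Ω` from symmetric matrices to the Lie algebra of the
symplectic group, it corresponds to the square `v vᵀ`. -/
def transvectionLog (v : Fin (2 * g) → R) : Matrix (Fin (2 * g)) (Fin (2 * g)) R :=
  vecMulVec v v * OmegaMat g R

lemma transvectionLog_zero : transvectionLog (0 : Fin (2 * g) → R) = 0 := by
  rw [transvectionLog, vecMulVec_zero, Matrix.zero_mul]

lemma mapMatrix_transvectionLog {S : Type} [CommRing S] (f : R →+* S) (v : Fin (2 * g) → R) :
    f.mapMatrix (transvectionLog v) = transvectionLog (f ∘ v) := by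
  have hsq : f.mapMatrix (vecMulVec v v) = vecMulVec (f ∘ v) (f ∘ v) :=
    Matrix.ext fun _ _ => map_mul f _ _
  rw [transvectionLog, map_mul, mapMatrix_OmegaMat, hsq, transvectionLog]

lemma transvectionLog_mul_self (v : Fin (2 * g) → R) :
    transvectionLog v * transvectionLog v = 0 := by
  rw [transvectionLog, ← mul_assoc, mul_assoc (vecMulVec v v), mul_vecMulVec,
    vecMulVec_mul_vecMulVec, dotProduct_OmegaMat_mulVec_self, zero_smul, vecMulVec_zero,
    Matrix.zero_mul]

lemma transpose_transvectionLog_mul_OmegaMat (v : Fin (2 * g) → R) :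
    (transvectionLog v)ᵀ * OmegaMat g R = -(OmegaMat g R * transvectionLog v) := by
  rw [transvectionLog, transpose_mul, transpose_vecMulVec, transpose_OmegaMat, neg_mul, neg_mul,
    mul_assoc]

lemma mul_smul_transvectionLog_mul_inv {x : GL (Fin (2 * g)) R} {m : R}
    (hx : (x : Matrix (Fin (2 * g)) (Fin (2 * g)) R)ᵀ * OmegaMat g R * x = m • OmegaMat g R)
    (v : Fin (2 * g) → R) :
    (x : Matrix (Fin (2 * g)) (Fin (2 * g)) R) * (m • transvectionLog v) * (x⁻¹ : GL _ R) =
      transvectionLog ((x : Matrix (Fin (2 * g)) (Fin (2 * g)) R) *ᵥ v) := by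
  rw [Units.mul_inv_eq_iff_eq_mul, transvectionLog, transvectionLog, ← mul_vecMulVec,
    ← vecMul_transpose, ← vecMulVec_mul]
  simp only [mul_assoc] at hx ⊢
  rw [hx, Matrix.mul_smul, Matrix.mul_smul, Matrix.mul_smul]

/-- The symplectic transvection `w ↦ w + c (vᵀ Ω w) v`. -/
def spTransvection (v : Fin (2 * g) → R) (c : R) : GL (Fin (2 * g)) R where
  val := 1 + c • transvectionLog v
  inv := 1 + (-c) • transvectionLog v
  val_inv := by simp [add_mul, mul_add, transvectionLog_mul_self]
  inv_val := by simp [add_mul, mul_add, transvectionLog_mul_self]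

lemma coe_spTransvection (v : Fin (2 * g) → R) (c : R) :
    (spTransvection v c : Matrix (Fin (2 * g)) (Fin (2 * g)) R) = 1 + c • transvectionLog v :=
  rfl

lemma spTransvection_zero (v : Fin (2 * g) → R) : spTransvection v 0 = 1 := by
  ext1
  rw [coe_spTransvection, zero_smul, add_zero, Units.val_one]

lemma spTransvection_mul_spTransvection (v : Fin (2 * g) → R) (c c' : R) :
    spTransvection v c * spTransvection v c' = spTransvection v (c + c') := by
  ext1
  simp only [Units.val_mul, coe_spTransvection, add_mul, mul_add, one_mul, mul_one,
    smul_mul_smul_comm, transvectionLog_mul_self, smul_zero, add_zero, add_smul]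
  abel

lemma spTransvection_inv (v : Fin (2 * g) → R) (c : R) :
    (spTransvection v c)⁻¹ = spTransvection v (-c) :=
  Units.ext rfl

lemma spTransvection_mem_spSubgroup (v : Fin (2 * g) → R) (c : R) :
    spTransvection v c ∈ spSubgroup g R := by
  rw [mem_spSubgroup, coe_spTransvection, transpose_add, transpose_one, transpose_smul, add_mul,
    one_mul, smul_mul_assoc, transpose_transvectionLog_mul_OmegaMat]
  simp only [add_mul, mul_add, mul_one, smul_mul_assoc, mul_smul_comm, neg_mul, mul_assoc,
    transvectionLog_mul_self, mul_zero, neg_zero, smul_zero, add_zero, smul_neg]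
  abel

lemma map_spTransvection {S : Type} [CommRing S] (f : R →+* S) (v : Fin (2 * g) → R) (c : R) :
    GeneralLinearGroup.map f (spTransvection v c) = spTransvection (f ∘ v) (f c) := by
  ext1
  change f.mapMatrix (1 + c • transvectionLog v) = _
  rw [map_add, map_one, RingHom.mapMatrix_apply, Matrix.map_smul' _ _ _ (map_mul f),
    ← RingHom.mapMatrix_apply, mapMatrix_transvectionLog, coe_spTransvection]

lemma conj_spTransvection {x : GL (Fin (2 * g)) R} {m : R}
    (hx : (x : Matrix (Fin (2 * g)) (Fin (2 * g)) R)ᵀ * OmegaMat g R * x = m • OmegaMat g R)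
    (v : Fin (2 * g) → R) (c : R) :
    x * spTransvection v (c * m) * x⁻¹ =
      spTransvection ((x : Matrix (Fin (2 * g)) (Fin (2 * g)) R) *ᵥ v) c := by
  ext1
  rw [Units.val_mul, Units.val_mul, coe_spTransvection, coe_spTransvection, mul_add, add_mul,
    mul_one, Units.mul_inv, mul_smul, mul_smul_comm, smul_mul_assoc,
    mul_smul_transvectionLog_mul_inv hx]

/-- The similitude `diag(1, -1, 1, -1, …)` of multiplier `-1`. -/
def antiSymplectic (g : ℕ) (R : Type) [CommRing R] : GL (Fin (2 * g)) R where
  val := diagonal (blockSign R)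
  inv := diagonal (blockSign R)
  val_inv := by simp [blockSign_mul_self]
  inv_val := by simp [blockSign_mul_self]

lemma coe_antiSymplectic :
    (antiSymplectic g R : Matrix (Fin (2 * g)) (Fin (2 * g)) R) = diagonal (blockSign R) :=
  rfl

lemma transpose_antiSymplectic_mul_OmegaMat_mul :
    (antiSymplectic g R : Matrix (Fin (2 * g)) (Fin (2 * g)) R)ᵀ * OmegaMat g R *
      antiSymplectic g R = (-1 : R) • OmegaMat g R := by
  ext i j
  simp only [coe_antiSymplectic, diagonal_transpose, mul_diagonal, diagonal_mul, OmegaMat_apply,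
    Matrix.smul_apply, smul_eq_mul]
  split_ifs with hij
  · rw [hij, blockSign_partner, blockSign_mul_self, one_mul, neg_one_mul]
  · rw [mul_zero, mul_zero, zero_mul]

lemma antiSymplectic_mulVec_single {j : Fin (2 * g)} (hj : (j : ℕ) % 2 = 0) :
    (antiSymplectic g R : Matrix (Fin (2 * g)) (Fin (2 * g)) R) *ᵥ Pi.single j 1 =
      Pi.single j 1 := by
  rw [coe_antiSymplectic, diagonal_mulVec_single, mul_one, blockSign, if_pos hj]

lemma antiSymplectic_mem_GSpSet : antiSymplectic g R ∈ GSpSet g R :=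
  ⟨-1, transpose_antiSymplectic_mul_OmegaMat_mul⟩

lemma map_antiSymplectic_eq_one {S : Type} [CommRing S] [CharP S 2] (f : R →+* S) :
    GeneralLinearGroup.map f (antiSymplectic g R) = 1 := by
  ext i j
  rw [GeneralLinearGroup.map_apply, coe_antiSymplectic, Units.val_one, diagonal_apply, one_apply]
  split_ifs with hij
  · rw [blockSign]
    split_ifs <;> simp [CharTwo.neg_eq]
  · exact map_zero f

lemma commutator_antiSymplectic_spTransvection {j : Fin (2 * g)} (hj : (j : ℕ) % 2 = 0) (c : R) :
    ⁅antiSymplectic g R, spTransvection (Pi.single j 1) (-c)⁆ =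
      spTransvection (Pi.single j 1) (2 * c) := by
  have hconj := conj_spTransvection (transpose_antiSymplectic_mul_OmegaMat_mul (g := g) (R := R))
    (Pi.single j 1) c
  rw [mul_neg_one, antiSymplectic_mulVec_single hj] at hconj
  rw [commutatorElement_def, hconj, spTransvection_inv, neg_neg, spTransvection_mul_spTransvection,
    two_mul c]

end Symplectic

section EdgeLaplacian

variable {n R : Type*} [Fintype n] [CommRing R]

/-- The rank-one matrix `(e_a - e_b)(e_a - e_b)ᵀ`, i.e. the Laplacian of the edge `ab`. -/
def edgeLaplacian {n : Type*} [DecidableEq n] (R : Type*) [CommRing R] (a b : n) : Matrix n n R :=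
  vecMulVec (Pi.single a 1 - Pi.single b 1) (Pi.single a 1 - Pi.single b 1)

lemma sum_smul_edgeLaplacian [DecidableEq n] (U : Matrix n n R) :
    ∑ a, ∑ b, U a b • edgeLaplacian R a b = diagonal ((U + Uᵀ) *ᵥ 1) - (U + Uᵀ) := by
  have hterm (a b : n) : U a b • edgeLaplacian R a b =
      single a a (U a b) + single b b (U a b) - (single a b (U a b) + single b a (U a b)) := by
    simp only [edgeLaplacian, vecMulVec_sub, sub_vecMulVec, ← single_eq_single_vecMulVec_single,
      smul_sub, smul_single, smul_eq_mul, mul_one]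
    abel
  simp only [hterm, Finset.sum_sub_distrib, Finset.sum_add_distrib]
  ext k l
  simp only [Matrix.sub_apply, Matrix.add_apply, Matrix.sum_apply, single_apply, ite_and,
    Finset.sum_ite_irrel, Finset.sum_const_zero, Finset.sum_ite_eq', Finset.mem_univ, ↓reduceIte,
    diagonal_apply, mulVec, dotProduct, transpose_apply, Pi.one_apply, mul_one,
    Finset.sum_add_distrib, sub_left_inj]
  grind

omit [Fintype n] in
lemma one_sub_edgeLaplacian [DecidableEq n] (a b : n) :
    1 - edgeLaplacian R a b = (Equiv.swap a b).permMatrix R := by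
  ext k l
  simp only [edgeLaplacian, Matrix.sub_apply, one_apply, vecMulVec_apply, Pi.sub_apply,
    Pi.single_apply, Equiv.Perm.permMatrix, PEquiv.toMatrix_toPEquiv_apply, Equiv.swap_apply_def]
  grind

lemma one_vecMul_edgeLaplacian [DecidableEq n] (a b : n) : 1 ᵥ* edgeLaplacian R a b = 0 := by
  rw [edgeLaplacian, vecMul_vecMulVec, dotProduct_sub, dotProduct_single_one,
    dotProduct_single_one, Pi.one_apply, Pi.one_apply, sub_self, zero_smul]

lemma mem_span_edgeLaplacian [LinearOrder n] {M : Matrix n n R} (hM : M.IsSymm)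
    (hrow : M *ᵥ 1 = 0) :
    M ∈ Submodule.span R (Set.range fun ab : n × n => edgeLaplacian R ab.1 ab.2) := by
  let U : Matrix n n R := of fun a b => if a < b then M a b else 0
  have hU : U + Uᵀ = M - diagonal (diag M) := by
    ext a b
    have hab := hM.apply a b
    simp only [U, Matrix.add_apply, Matrix.sub_apply, diagonal_apply, diag_apply, transpose_apply,
      of_apply]
    grind
  have hsum : ∑ a, ∑ b, U a b • edgeLaplacian R a b = -M := by
    have hdiag : diagonal (diag M) *ᵥ 1 = diag M := by ext a; simp [mulVec_diagonal]
    have hneg : diagonal (-diag M) = -diagonal (diag M) := (diagonal_neg _).symm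
    rw [sum_smul_edgeLaplacian, hU, sub_mulVec, hrow, hdiag, zero_sub, hneg]
    abel
  rw [← neg_mem_iff, ← hsum]
  exact Submodule.sum_mem _ fun a _ => Submodule.sum_mem _ fun b _ =>
    Submodule.smul_mem _ _ (Submodule.subset_span ⟨(a, b), rfl⟩)

end EdgeLaplacian

section ModTwo

variable {g : ℕ}

/-- The matrix of `ψ` without its last row, which is zero. Its columns form a basis of the vectors
of `(ℤ/2ℤ)^{2g+1}` with coordinate sum zero, a model of `W` on which `S_{2g+1}` permutes
coordinates. -/
def truncPsi (g : ℕ) : Matrix (Fin (2 * g + 1)) (Fin (2 * g)) (ZMod 2) :=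
  (PsiMat g).submatrix Fin.castSucc id

lemma PsiMat_last (j : Fin (2 * g)) : PsiMat g (Fin.last _) j = 0 := by
  simp only [PsiMat, of_apply, Fin.val_last]
  grind

lemma truncPsi_apply (k : Fin (2 * g + 1)) (j : Fin (2 * g)) :
    truncPsi g k j =
      (if (k : ℕ) < 2 * ((j : ℕ) / 2) + 1 then 1 else 0) + if j.succ = k then 1 else 0 := by
  simp only [truncPsi, submatrix_apply, PsiMat, of_apply, id, Fin.val_castSucc, Fin.ext_iff,
    Fin.val_succ]
  grind

lemma sum_ite_val_lt_of_odd {n m : ℕ} (hm : m ≤ n) (hodd : Odd m) :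
    ∑ k : Fin n, (if (k : ℕ) < m then (1 : ZMod 2) else 0) = 1 := by
  rw [Finset.sum_boole, Fin.card_filter_val_lt, min_eq_right hm, ZMod.natCast_eq_one_iff_odd.2 hodd]

lemma one_vecMul_truncPsi : 1 ᵥ* truncPsi g = 0 := by
  ext j
  simp only [vecMul, dotProduct, Pi.one_apply, one_mul, truncPsi_apply, Finset.sum_add_distrib]
  rw [sum_ite_val_lt_of_odd (by grind) (by grind), Fintype.sum_ite_eq, CharTwo.add_self_eq_zero,
    Pi.zero_apply]

lemma transpose_truncPsi_mul_truncPsi : (truncPsi g)ᵀ * truncPsi g = OmegaMat g (ZMod 2) := by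
  ext i j
  have hsegments : ∑ k : Fin (2 * g + 1),
      (if (k : ℕ) < 2 * ((i : ℕ) / 2) + 1 then (1 : ZMod 2) else 0) *
        (if (k : ℕ) < 2 * ((j : ℕ) / 2) + 1 then 1 else 0) = 1 := by
    simp only [← ite_and, mul_ite, mul_one, mul_zero, ← lt_min_iff]
    exact sum_ite_val_lt_of_odd (by grind) (by grind)
  simp only [mul_apply, transpose_apply, truncPsi_apply, add_mul, mul_add, Finset.sum_add_distrib,
    hsegments]
  simp only [Finset.sum_mul_boole, Finset.sum_boole_mul, Finset.mem_univ, if_true]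
  simp only [OmegaMat, of_apply, Fin.val_succ, Fin.succ_inj, CharTwo.neg_eq]
  have := CharTwo.add_self_eq_zero (1 : ZMod 2)
  grind

/-- The left inverse of `truncPsi g` which kills the all-ones vector. -/
def truncPsiInv (g : ℕ) : Matrix (Fin (2 * g)) (Fin (2 * g + 1)) (ZMod 2) :=
  OmegaMat g (ZMod 2) * (truncPsi g)ᵀ

lemma truncPsiInv_mul_truncPsi : truncPsiInv g * truncPsi g = 1 := by
  rw [truncPsiInv, Matrix.mul_assoc, transpose_truncPsi_mul_truncPsi, OmegaMat_mul_self]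
  exact ZModModule.neg_eq_self 1

lemma truncPsiInv_mulVec_one : truncPsiInv g *ᵥ 1 = 0 := by
  rw [truncPsiInv, ← mulVec_mulVec, mulVec_transpose, one_vecMul_truncPsi, mulVec_zero]

lemma transpose_truncPsiInv_mul_OmegaMat :
    (truncPsiInv g)ᵀ * OmegaMat g (ZMod 2) = truncPsi g := by
  rw [truncPsiInv, transpose_mul, transpose_transpose, transpose_OmegaMat, Matrix.mul_assoc,
    neg_mul, OmegaMat_mul_self, neg_neg, Matrix.mul_one]

-- An all-ones column makes `truncPsi g` square, with the left inverse `hleft`.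
lemma truncPsi_mul_truncPsiInv : truncPsi g * truncPsiInv g = 1 - vecMulVec 1 1 := by
  have hleft : fromRows (truncPsiInv g) (replicateRow Unit 1) *
      fromCols (truncPsi g) (replicateCol Unit 1) = 1 := by
    have hcard : (1 : Fin (2 * g + 1) → ZMod 2) ⬝ᵥ 1 = 1 := by
      rw [one_dotProduct_one, Fintype.card_fin, ZMod.natCast_eq_one_iff_odd]
      exact odd_two_mul_add_one g
    rw [fromRows_mul_fromCols, truncPsiInv_mul_truncPsi, ← replicateCol_mulVec,
      ← replicateRow_vecMul, truncPsiInv_mulVec_one, one_vecMul_truncPsi,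
      replicateRow_mul_replicateCol, hcard, replicateCol_zero, replicateRow_zero,
      ← fromBlocks_one]
    rfl
  have hright := (fromCols_mul_fromRows_eq_one_comm
    (finSuccEquivLast.trans (Equiv.optionEquivSumPUnit _)) _ _ _ _).2 hleft
  rw [fromCols_mul_fromRows, ← vecMulVec_eq] at hright
  exact eq_sub_of_add_eq hright

/-- The vector of `M` which `ψ` maps to `e_a - e_b`. -/
def edgeVec (a b : Fin (2 * g + 1)) : Fin (2 * g) → ZMod 2 :=
  truncPsiInv g *ᵥ (Pi.single a 1 - Pi.single b 1)

lemma edgeVec_self (a : Fin (2 * g + 1)) : edgeVec a a = 0 := by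
  rw [edgeVec, sub_self, mulVec_zero]

lemma truncPsi_mulVec_edgeVec (a b : Fin (2 * g + 1)) :
    truncPsi g *ᵥ edgeVec a b = Pi.single a 1 - Pi.single b 1 := by
  rw [edgeVec, mulVec_mulVec, truncPsi_mul_truncPsiInv, sub_mulVec, one_mulVec,
    vecMulVec_mulVec, dotProduct_sub, dotProduct_single_one, dotProduct_single_one]
  simp only [Pi.one_apply, sub_self, MulOpposite.op_zero, zero_smul, sub_zero]

lemma edgeVec_eq_of_truncPsi_mulVec {a b : Fin (2 * g + 1)} {v : Fin (2 * g) → ZMod 2}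
    (hv : truncPsi g *ᵥ v = Pi.single a 1 - Pi.single b 1) : edgeVec a b = v := by
  rw [edgeVec, ← hv, mulVec_mulVec, truncPsiInv_mul_truncPsi, one_mulVec]

lemma edgeVec_castSucc_succ {j : Fin (2 * g)} (hj : (j : ℕ) = 0) :
    edgeVec j.castSucc j.succ = Pi.single j 1 := by
  refine edgeVec_eq_of_truncPsi_mulVec (funext fun k => ?_)
  simp only [mulVec_single_one, col_apply, truncPsi_apply, Pi.sub_apply, Pi.single_apply,
    CharTwo.sub_eq_add, Fin.ext_iff, Fin.val_succ, Fin.val_castSucc]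
  grind

lemma transvectionLog_edgeVec (a b : Fin (2 * g + 1)) : transvectionLog (edgeVec a b) =
    truncPsiInv g * edgeLaplacian (ZMod 2) a b * truncPsi g := by
  rw [edgeLaplacian, mul_vecMulVec, vecMulVec_mul, ← transpose_truncPsiInv_mul_OmegaMat,
    ← vecMul_vecMul, vecMul_transpose, ← vecMulVec_mul]
  rfl

lemma truncPsi_mul_spTransvection_edgeVec (a b : Fin (2 * g + 1)) :
    truncPsi g * (spTransvection (edgeVec a b) 1).val =
      (Equiv.swap a b).permMatrix (ZMod 2) * truncPsi g := by
  rw [coe_spTransvection, one_smul, transvectionLog_edgeVec, Matrix.mul_add, Matrix.mul_one,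
    ← Matrix.mul_assoc, ← Matrix.mul_assoc, truncPsi_mul_truncPsiInv, sub_mul,
    vecMulVec_mul, one_vecMul_edgeLaplacian, vecMulVec_zero, one_mul, sub_zero,
    ← one_sub_edgeLaplacian, Matrix.sub_mul, Matrix.one_mul, ZModModule.sub_eq_add]

lemma spTransvection_edgeVec_mulVec_edgeVec (a b c d : Fin (2 * g + 1)) :
    (spTransvection (edgeVec a b) 1).val *ᵥ edgeVec c d =
      edgeVec (Equiv.swap a b c) (Equiv.swap a b d) := by
  refine (edgeVec_eq_of_truncPsi_mulVec ?_).symm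
  rw [mulVec_mulVec, truncPsi_mul_spTransvection_edgeVec, ← mulVec_mulVec, truncPsi_mulVec_edgeVec,
    permMatrix_mulVec]
  ext k
  simp only [Function.comp_apply, Pi.sub_apply, Pi.single_apply, ← Equiv.eq_symm_apply,
    Equiv.symm_swap]

lemma permMat_mul_apply {m : Type*} (σ : Equiv.Perm (Fin (2 * g + 2)))
    (A : Matrix (Fin (2 * g + 2)) m (ZMod 2)) (i : Fin (2 * g + 2)) (j : m) :
    (permMat g σ * A) i j = A (σ.symm i) j := by
  simp only [mul_apply, permMat, of_apply, ite_mul, one_mul, zero_mul, ← Equiv.eq_symm_apply,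
    Finset.sum_ite_eq', Finset.mem_univ, if_true]

lemma representsPerm_spTransvection_edgeVec (a b : Fin (2 * g + 1)) :
    representsPerm g (spTransvection (edgeVec a b) 1).val
      (Equiv.swap a.castSucc b.castSucc) := by
  have hrows : PsiMat g * (spTransvection (edgeVec a b) 1).val =
      permMat g (Equiv.swap a.castSucc b.castSucc) * PsiMat g := by
    ext k j
    rw [permMat_mul_apply, Equiv.symm_swap]
    refine Fin.lastCases ?_ (fun k => ?_) k
    · rw [Equiv.swap_apply_of_ne_of_ne (Fin.castSucc_ne_last _).symm (Fin.castSucc_ne_last _).symm,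
        PsiMat_last, mul_apply]
      exact Finset.sum_eq_zero fun i _ => by rw [PsiMat_last, zero_mul]
    · have hrow := congrFun (congrFun (truncPsi_mul_spTransvection_edgeVec a b) k) j
      rw [Equiv.Perm.permMatrix, PEquiv.toMatrix_toPEquiv_mul] at hrow
      rw [(Fin.castSucc_injective _).swap_apply]
      exact hrow
  intro j
  rw [hrows, sub_self]
  exact (tline g).zero_mem

lemma edgeVec_mem_of_spTransvection_mulVec_mem {S : Set (Fin (2 * g) → ZMod 2)}
    (hS : ∀ a b, ∀ v ∈ S, (spTransvection (edgeVec a b) 1).val *ᵥ v ∈ S)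
    {c d : Fin (2 * g + 1)} (hcd : c ≠ d) (hmem : edgeVec c d ∈ S) {a b : Fin (2 * g + 1)}
    (hab : a ≠ b) : edgeVec a b ∈ S := by
  have hca := hS c a _ hmem
  rw [spTransvection_edgeVec_mulVec_edgeVec, Equiv.swap_apply_left] at hca
  have hcab := hS (Equiv.swap c a d) b _ hca
  have hne : a ≠ Equiv.swap c a d := by
    simpa only [Equiv.swap_apply_left] using (Equiv.swap c a).injective.ne hcd
  rwa [spTransvection_edgeVec_mulVec_edgeVec, Equiv.swap_apply_left,
    Equiv.swap_apply_of_ne_of_ne hne hab] at hcab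

lemma mem_span_transvectionLog_edgeVec {C : Matrix (Fin (2 * g)) (Fin (2 * g)) (ZMod 2)}
    (hC : (OmegaMat g (ZMod 2)).IsSkewAdjoint C) :
    C ∈ Submodule.span (ZMod 2) (Set.range fun ab : Fin (2 * g + 1) × Fin (2 * g + 1) =>
      transvectionLog (edgeVec ab.1 ab.2)) := by
  set M := truncPsi g * C * truncPsiInv g with hM
  have hMC : C = truncPsiInv g * M * truncPsi g := by
    calc C = (truncPsiInv g * truncPsi g) * C * (truncPsiInv g * truncPsi g) := by
          rw [truncPsiInv_mul_truncPsi, one_mul, mul_one]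
      _ = truncPsiInv g * M * truncPsi g := by simp only [hM, Matrix.mul_assoc]
  have hMspan : M ∈ Submodule.span (ZMod 2)
      (Set.range fun ab : Fin (2 * g + 1) × _ => edgeLaplacian (ZMod 2) ab.1 ab.2) := by
    refine mem_span_edgeLaplacian ?_ ?_
    · rw [IsSymm, hM, truncPsiInv, Matrix.mul_assoc, ← Matrix.mul_assoc C, transpose_mul,
        transpose_mul, transpose_transpose, (isSymm_mul_OmegaMat_of_isSkewAdjoint hC).eq,
        Matrix.mul_assoc]
    · rw [hM, ← mulVec_mulVec, truncPsiInv_mulVec_one, mulVec_zero]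
  have hmap := Submodule.mem_map_of_mem
    (f := mulRightLinearMap _ (ZMod 2) (truncPsi g) ∘ₗ
      mulLeftLinearMap _ (ZMod 2) (truncPsiInv g)) hMspan
  rw [Submodule.map_span, ← Set.range_comp] at hmap
  rw [hMC]
  simp only [transvectionLog_edgeVec]
  exact hmap

end ModTwo

section Monodromy

variable {g : ℕ}

lemma spTransvection_edgeVec_mem {P : Subgroup (GL (Fin (2 * g)) (ZMod 2))}
    (hP : ∀ B : GL (Fin (2 * g)) (ZMod 2), (∃ σ : Equiv.Perm (Fin (2 * g + 2)),
      σ (Fin.last _) = Fin.last _ ∧ representsPerm g B.val σ) → B ∈ P)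
    (a b : Fin (2 * g + 1)) : spTransvection (edgeVec a b) 1 ∈ P :=
  hP _ ⟨Equiv.swap a.castSucc b.castSucc,
    Equiv.swap_apply_of_ne_of_ne (Fin.castSucc_ne_last _).symm (Fin.castSucc_ne_last _).symm,
    representsPerm_spTransvection_edgeVec a b⟩

variable {H : Subgroup (GL (Fin (2 * g)) ℤ_[2])}
  (hpre : ∀ x ∈ GSpSet g ℤ_[2], glReduction x ∈ H.map glReduction → x ∈ H)

include hpre

lemma antiSymplectic_mem : antiSymplectic g ℤ_[2] ∈ H :=
  hpre _ antiSymplectic_mem_GSpSet (by rw [map_antiSymplectic_eq_one]; exact one_mem _)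

lemma spTransvection_mem {v : Fin (2 * g) → ℤ_[2]}
    (hv : spTransvection (PadicInt.toZMod ∘ v) 1 ∈ H.map glReduction) (c : ℤ_[2]) :
    spTransvection v c ∈ H := by
  refine hpre _ (spSubgroup_subset_GSpSet (spTransvection_mem_spSubgroup v c)) ?_
  rw [map_spTransvection]
  obtain hc | hc : PadicInt.toZMod c = 0 ∨ PadicInt.toZMod c = 1 := by
    generalize PadicInt.toZMod c = d
    decide +revert
  · rw [hc, spTransvection_zero]
    exact one_mem _
  · rwa [hc]

lemma transvectionLog_single_mem_congruenceGraded {j : Fin (2 * g)} (hj : (j : ℕ) % 2 = 0)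
    (hT : spTransvection (Pi.single j 1) 1 ∈ H.map glReduction) (k : ℕ) :
    transvectionLog (Pi.single j 1) ∈ congruenceGraded ⁅H, H⁆ k := by
  have hred : PadicInt.toZMod ∘ (Pi.single j 1 : Fin (2 * g) → ℤ_[2]) = Pi.single j 1 := by
    ext i
    simp only [Function.comp_apply, Pi.single_apply, apply_ite PadicInt.toZMod, map_one, map_zero]
  refine ⟨spTransvection (Pi.single j 1) (2 * 2 ^ k), ?_, transvectionLog (Pi.single j 1), ?_, ?_⟩
  · rw [← commutator_antiSymplectic_spTransvection hj]
    exact Subgroup.commutator_mem_commutator (antiSymplectic_mem hpre)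
      (spTransvection_mem hpre (by rwa [hred]) _)
  · rw [coe_spTransvection, pow_succ', Nat.cast_ofNat]
  · rw [mapMatrix_transvectionLog, hred]

lemma transvectionLog_edgeVec_mem_congruenceGraded
    (hT : ∀ a b : Fin (2 * g + 1), spTransvection (edgeVec a b) 1 ∈ H.map glReduction)
    (k : ℕ) (a b : Fin (2 * g + 1)) :
    transvectionLog (edgeVec a b) ∈ congruenceGraded ⁅H, H⁆ k := by
  rcases eq_or_ne a b with rfl | hab
  · rw [edgeVec_self, transvectionLog_zero]
    exact zero_mem _
  obtain ⟨j, hj⟩ : ∃ j : Fin (2 * g), (j : ℕ) = 0 := ⟨⟨0, by grind⟩, rfl⟩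
  refine edgeVec_mem_of_spTransvection_mulVec_mem
    (S := {v | transvectionLog v ∈ congruenceGraded ⁅H, H⁆ k}) (fun c d v hv => ?_)
    (Fin.castSucc_lt_succ (i := j)).ne ?_ hab
  · obtain ⟨h, hH, hred⟩ := hT c d
    have hconj := conj_mem_congruenceGraded (Subgroup.normalizer_commutator_ge_left H H hH) hv
    rw [hred] at hconj
    rwa [Set.mem_ofPred_eq, ← mul_smul_transvectionLog_mul_inv (m := 1) ?_, one_smul]
    rw [one_smul]
    exact spTransvection_mem_spSubgroup _ _
  · rw [edgeVec_castSucc_succ hj]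
    exact transvectionLog_single_mem_congruenceGraded hpre (by rw [hj])
      (edgeVec_castSucc_succ hj ▸ hT _ _) k

lemma mem_congruenceGraded_of_isSkewAdjoint
    (hT : ∀ a b : Fin (2 * g + 1), spTransvection (edgeVec a b) 1 ∈ H.map glReduction)
    {C : Matrix (Fin (2 * g)) (Fin (2 * g)) (ZMod 2)}
    (hC : (OmegaMat g (ZMod 2)).IsSkewAdjoint C) (k : ℕ) : C ∈ congruenceGraded ⁅H, H⁆ k := by
  have hspan : Submodule.span (ZMod 2) (Set.range fun ab : Fin (2 * g + 1) × Fin (2 * g + 1) =>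
      transvectionLog (edgeVec ab.1 ab.2)) ≤
        AddSubgroup.toZModSubmodule 2 (congruenceGraded ⁅H, H⁆ k) :=
    Submodule.span_le.2 (Set.range_subset_iff.2 fun ab =>
      transvectionLog_edgeVec_mem_congruenceGraded hpre hT k ab.1 ab.2)
  exact hspan (mem_span_transvectionLog_edgeVec hC)

end Monodromy

end MaximalMonodromy

open MaximalMonodromy in
theorem maximal_monodromy_stmt2_general (g : ℕ)
    (H : Subgroup (GL (Fin (2 * g)) ℤ_[2]))
    (hGSp : (H : Set (GL (Fin (2 * g)) ℤ_[2])) ⊆ GSpSet g ℤ_[2])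
    (hpre : ∀ x : GL (Fin (2 * g)) ℤ_[2], x ∈ GSpSet g ℤ_[2] →
      redMod2 g x ∈ Subgroup.map (redMod2 g) H → x ∈ H)
    (hS : ∀ B : GL (Fin (2 * g)) (ZMod 2),
      (∃ σ : Equiv.Perm (Fin (2 * g + 2)),
        σ (Fin.last (2 * g + 1)) = Fin.last (2 * g + 1) ∧
        representsPerm g (B : Matrix (Fin (2 * g)) (Fin (2 * g)) (ZMod 2)) σ) →
      B ∈ Subgroup.map (redMod2 g) H) :
    closure ((⁅H, H⁆ : Subgroup (GL (Fin (2 * g)) ℤ_[2])) : Set (GL (Fin (2 * g)) ℤ_[2]))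
      = {x : GL (Fin (2 * g)) ℤ_[2] | x ∈ SpSet g ℤ_[2] ∧
          redMod2 g x ∈ ⁅Subgroup.map (redMod2 g) H, Subgroup.map (redMod2 g) H⁆} := by
  let G := spSubgroup g ℤ_[2] ⊓ Subgroup.comap glReduction ⁅H.map glReduction, H.map glReduction⁆
  have hclosed : IsClosed (G : Set (GL (Fin (2 * g)) ℤ_[2])) :=
    isClosed_spSubgroup.inter (isClosed_comap_glReduction _)
  have hle : ⁅H, H⁆ ≤ G := by
    refine le_inf (commutator_le_spSubgroup hGSp) (Subgroup.map_le_iff_le_comap.1 ?_)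
    exact (Subgroup.map_commutator H H glReduction).le
  have hmap : G.map glReduction ≤ ⁅H, H⁆.map glReduction := by
    rw [Subgroup.map_commutator]
    exact (Subgroup.map_mono inf_le_right).trans (Subgroup.map_comap_le _ _)
  refine closure_eq_of_congruenceGraded_le hclosed hle hmap fun k C hC => ?_
  have hskew := isSkewAdjoint_of_mem_congruenceGraded (K := G) (J := OmegaMat g ℤ_[2])
    (fun x hx => hx.1) hC
  rw [mapMatrix_OmegaMat] at hskew
  exact mem_congruenceGraded_of_isSkewAdjoint hpre (spTransvection_edgeVec_mem hS) hskew k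

/-- Let `g ≥ 2` and let `H ⊆ GSp_{2g}(ℤ_2)` be a subgroup which is the full preimage (inside
`GSp_{2g}(ℤ_2)`, under mod-2 reduction) of its mod-2 image `H(2)`, and whose mod-2 image
contains the embedded copy of `S_{2g+1}` (the permutations of `S_{2g+2}` fixing the last
coordinate, acting on `W = t^⊥/span(t)`). Then the closure of the commutator subgroup of `H`
equals the full preimage of `[H(2), H(2)]` under the reduction `Sp_{2g}(ℤ_2) → Sp_{2g}(ℤ/2ℤ)`. -/
theorem maximal_monodromy_stmt2 (g : ℕ) (hg : 2 ≤ g)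
    (H : Subgroup (GL (Fin (2*g)) ℤ_[2]))
    (hGSp : (H : Set (GL (Fin (2*g)) ℤ_[2])) ⊆ GSpSet g ℤ_[2])
    (hpre : ∀ x : GL (Fin (2*g)) ℤ_[2], x ∈ GSpSet g ℤ_[2] →
      redMod2 g x ∈ Subgroup.map (redMod2 g) H → x ∈ H)
    (hS : ∀ B : GL (Fin (2*g)) (ZMod 2),
      (∃ σ : Equiv.Perm (Fin (2*g+2)),
        σ ⟨2*g+1, by omega⟩ = (⟨2*g+1, by omega⟩ : Fin (2*g+2)) ∧
        representsPerm g (B : Matrix (Fin (2*g)) (Fin (2*g)) (ZMod 2)) σ) →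
      B ∈ Subgroup.map (redMod2 g) H) :
    closure ((⁅H, H⁆ : Subgroup (GL (Fin (2*g)) ℤ_[2])) : Set (GL (Fin (2*g)) ℤ_[2]))
      = {x : GL (Fin (2*g)) ℤ_[2] | x ∈ SpSet g ℤ_[2] ∧
          redMod2 g x ∈ ⁅Subgroup.map (redMod2 g) H, Subgroup.map (redMod2 g) H⁆} :=
  maximal_monodromy_stmt2_general g H hGSp hpre hS
end

section
/- Let g ≥ 2 and let ℓ be a prime number. The (ℤ/ℓℤ)-linear span of the set of commutators {AB − BA : A, B ∈ 𝔤𝔰𝔭_{2g}(ℤ/ℓℤ)} equals 𝔰𝔭_{2g}(ℤ/ℓℤ). In other words, the derived subalgebra [𝔤𝔰𝔭_{2g}(ℤ/ℓℤ), 𝔤𝔰𝔭_{2g}(ℤ/ℓℤ)] equals 𝔰𝔭_{2g}(ℤ/ℓℤ). -/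
/-!
A commutator of infinitesimal similitudes has multiplier zero, which gives one inclusion. For the
other, reorder the basis so that the form is `J = [[0, -1], [1, 0]]`: the symplectic Lie algebra
then consists of the matrices `[[A, B], [C, -Aᵀ]]` with `B` and `C` symmetric.
The projection `[[1, 0], [0, 0]]` is an infinitesimal similitude of multiplier `1`, and its
commutator with `[[0, B], [-C, 0]]` is `[[0, B], [C, 0]]`; no division by `2` occurs, whereas within
the symplectic Lie algebra itself this step would fail in characteristic `2`.
The commutator of `[[0, S], [0, 0]]` and `[[0, 0], [T, 0]]` is `[[S T, 0], [0, -(S T)ᵀ]]`, and the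
products `S T` of symmetric matrices span all square matrices.
-/

open Matrix

/-- The Lie algebra `𝔤𝔰𝔭_{2g}(R)`: matrices `Λ` with `ΛᵀΩ + ΩΛ = d·Ω` for some `d ∈ R`. -/
def gspSet (g : ℕ) (R : Type) [CommRing R] : Set (Matrix (Fin (2*g)) (Fin (2*g)) R) :=
  {Λ | ∃ d : R, Λᵀ * OmegaMat g R + OmegaMat g R * Λ = d • OmegaMat g R}

/-- The Lie algebra `𝔰𝔭_{2g}(R)`: matrices `Λ` with `ΛᵀΩ + ΩΛ = 0`. -/
def spLieSet (g : ℕ) (R : Type) [CommRing R] : Set (Matrix (Fin (2*g)) (Fin (2*g)) R) :=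
  {Λ | Λᵀ * OmegaMat g R + OmegaMat g R * Λ = 0}

section Similitudes

variable {n R : Type*} [Fintype n] [CommRing R]

/-- `A` is an infinitesimal similitude, of multiplier `d`, of the bilinear form with Gram matrix
`W`. This is the defining condition of the general symplectic Lie algebra when `W` is a symplectic
form, and the one of the symplectic Lie algebra when moreover `d = 0`. -/
def IsInfinitesimalSimilitude (W : Matrix n n R) (d : R) (A : Matrix n n R) : Prop :=
  Aᵀ * W + W * A = d • W

/-- The linear span of the commutators of infinitesimal similitudes of `W`, that is, the derived
subalgebra of the Lie algebra of infinitesimal similitudes, as a submodule. -/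
def similitudeCommutatorSpan (W : Matrix n n R) : Submodule R (Matrix n n R) :=
  Submodule.span R {X | ∃ A B : Matrix n n R, (∃ d, IsInfinitesimalSimilitude W d A) ∧
    (∃ d, IsInfinitesimalSimilitude W d B) ∧ X = A * B - B * A}

variable {W A B : Matrix n n R} {d e : R}

theorem commutator_mem_similitudeCommutatorSpan (hA : IsInfinitesimalSimilitude W d A)
    (hB : IsInfinitesimalSimilitude W e B) : A * B - B * A ∈ similitudeCommutatorSpan W :=
  Submodule.subset_span ⟨A, B, ⟨d, hA⟩, ⟨e, hB⟩, rfl⟩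

namespace IsInfinitesimalSimilitude

theorem transpose_mul (hA : IsInfinitesimalSimilitude W d A) : Aᵀ * W = d • W - W * A :=
  eq_sub_of_add_eq hA

theorem transpose_mul_mul (hA : IsInfinitesimalSimilitude W d A)
    (hB : IsInfinitesimalSimilitude W e B) :
    (A * B)ᵀ * W = (d * e) • W - d • (W * B) - e • (W * A) + W * (B * A) := by
  calc (A * B)ᵀ * W = Bᵀ * (Aᵀ * W) := by rw [Matrix.transpose_mul, Matrix.mul_assoc]
    _ = d • (Bᵀ * W) - Bᵀ * W * A := by
      rw [hA.transpose_mul, Matrix.mul_sub, Matrix.mul_smul, Matrix.mul_assoc]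
    _ = (d * e) • W - d • (W * B) - e • (W * A) + W * (B * A) := by
      rw [hB.transpose_mul, smul_sub, smul_smul, Matrix.sub_mul, Matrix.smul_mul,
        Matrix.mul_assoc]
      abel

theorem commutator (hA : IsInfinitesimalSimilitude W d A)
    (hB : IsInfinitesimalSimilitude W e B) : IsInfinitesimalSimilitude W 0 (A * B - B * A) := by
  rw [IsInfinitesimalSimilitude, transpose_sub, Matrix.sub_mul, hA.transpose_mul_mul hB,
    hB.transpose_mul_mul hA, mul_comm e d, Matrix.mul_sub, zero_smul]
  abel

theorem map_algEquiv_iff {m : Type*} [Fintype m] [DecidableEq m] [DecidableEq n]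
    (φ : Matrix n n R ≃ₐ[R] Matrix m m R) (hφ : ∀ A, (φ A)ᵀ = φ Aᵀ) :
    IsInfinitesimalSimilitude (φ W) d (φ A) ↔ IsInfinitesimalSimilitude W d A := by
  rw [IsInfinitesimalSimilitude, hφ, ← map_mul, ← map_mul, ← map_add, ← map_smul,
    φ.injective.eq_iff, IsInfinitesimalSimilitude]

end IsInfinitesimalSimilitude

variable [DecidableEq n]

theorem mem_skewAdjointMatricesSubmodule_iff_isInfinitesimalSimilitude_zero :
    A ∈ skewAdjointMatricesSubmodule W ↔ IsInfinitesimalSimilitude W 0 A := by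
  rw [mem_skewAdjointMatricesSubmodule, Matrix.IsSkewAdjoint, Matrix.IsAdjointPair,
    IsInfinitesimalSimilitude, Matrix.mul_neg, zero_smul, add_eq_zero_iff_eq_neg]

theorem similitudeCommutatorSpan_le_skewAdjointMatricesSubmodule (W : Matrix n n R) :
    similitudeCommutatorSpan W ≤ skewAdjointMatricesSubmodule W := by
  refine Submodule.span_le.mpr ?_
  rintro _ ⟨A, B, ⟨d, hA⟩, ⟨e, hB⟩, rfl⟩
  exact mem_skewAdjointMatricesSubmodule_iff_isInfinitesimalSimilitude_zero.mpr
    (hA.commutator hB)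

variable {m : Type*} [Fintype m] [DecidableEq m]

theorem map_similitudeCommutatorSpan_le (φ : Matrix n n R ≃ₐ[R] Matrix m m R)
    (hφ : ∀ A, (φ A)ᵀ = φ Aᵀ) (W : Matrix n n R) :
    (similitudeCommutatorSpan W).map φ.toLinearMap ≤ similitudeCommutatorSpan (φ W) := by
  refine (Submodule.map_span_le _ _ _).mpr ?_
  rintro _ ⟨A, B, ⟨d, hA⟩, ⟨e, hB⟩, rfl⟩
  simpa only [AlgEquiv.toLinearMap_apply, map_sub, map_mul] using
    commutator_mem_similitudeCommutatorSpan
      ((IsInfinitesimalSimilitude.map_algEquiv_iff φ hφ).mpr hA)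
      ((IsInfinitesimalSimilitude.map_algEquiv_iff φ hφ).mpr hB)

theorem similitudeCommutatorSpan_map_eq_skewAdjointMatricesSubmodule
    (φ : Matrix n n R ≃ₐ[R] Matrix m m R) (hφ : ∀ A, (φ A)ᵀ = φ Aᵀ)
    (hW : similitudeCommutatorSpan W = skewAdjointMatricesSubmodule W) :
    similitudeCommutatorSpan (φ W) = skewAdjointMatricesSubmodule (φ W) := by
  refine (similitudeCommutatorSpan_le_skewAdjointMatricesSubmodule _).antisymm fun X hX ↦ ?_
  obtain ⟨A, rfl⟩ := φ.surjective X
  rw [mem_skewAdjointMatricesSubmodule_iff_isInfinitesimalSimilitude_zero,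
    IsInfinitesimalSimilitude.map_algEquiv_iff φ hφ,
    ← mem_skewAdjointMatricesSubmodule_iff_isInfinitesimalSimilitude_zero, ← hW] at hX
  exact map_similitudeCommutatorSpan_le φ hφ W (Submodule.mem_map_of_mem hX)

end Similitudes

theorem span_isSymm_mul_isSymm_eq_top {l R : Type*} [Fintype l] [Semiring R] :
    Submodule.span R {X : Matrix l l R | ∃ S T : Matrix l l R, S.IsSymm ∧ T.IsSymm ∧ X = S * T} =
      ⊤ := by
  classical
  refine Submodule.eq_top_iff'.mpr fun A ↦ ?_
  induction A using Matrix.induction_on' with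
  | h_zero => exact zero_mem _
  | h_add A B hA hB => exact add_mem hA hB
  | h_std_basis i j a =>
    refine Submodule.subset_span ?_
    obtain rfl | hij := eq_or_ne i j
    · exact ⟨single i i 1, single i i a, transpose_single .., transpose_single .., by simp⟩
    · refine ⟨single i i 1, single i j a + single j i a, transpose_single .., ?_, ?_⟩
      · rw [IsSymm, transpose_add, transpose_single, transpose_single, add_comm]
      · rw [Matrix.mul_add, single_mul_single_same, single_mul_single_of_ne _ _ _ _ hij, one_mul,
          add_zero]

section Blocks

variable {l R : Type*} [Fintype l] [DecidableEq l] [CommRing R] {A B C D S T : Matrix l l R}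

theorem isInfinitesimalSimilitude_J_fromBlocks_iff {d : R} :
    IsInfinitesimalSimilitude (J l R) d (fromBlocks A B C D) ↔
      B.IsSymm ∧ C.IsSymm ∧ D = d • 1 - Aᵀ := by
  have lower_left : Dᵀ + A = d • 1 ↔ D = d • 1 - Aᵀ := by
    rw [← transpose_inj, transpose_add, transpose_transpose, transpose_smul, transpose_one,
      eq_sub_iff_add_eq]
  have upper_right : -Aᵀ + -D = d • -1 ↔ D = d • 1 - Aᵀ := by
    rw [smul_neg, ← neg_add, neg_inj, eq_sub_iff_add_eq, add_comm]
  have upper_left : Cᵀ + -C = 0 ↔ C.IsSymm := by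
    rw [← sub_eq_add_neg, sub_eq_zero, IsSymm]
  have lower_right : -Bᵀ + B = 0 ↔ B.IsSymm := by
    rw [neg_add_eq_zero, IsSymm]
  simp only [IsInfinitesimalSimilitude, J, fromBlocks_transpose, fromBlocks_multiply,
    fromBlocks_add, fromBlocks_smul, fromBlocks_inj, Matrix.mul_zero, Matrix.zero_mul,
    Matrix.mul_one, Matrix.one_mul, Matrix.mul_neg, Matrix.neg_mul, zero_add, add_zero, smul_zero,
    lower_left, upper_right, upper_left, lower_right]
  tauto

theorem fromBlocks_zero_diagonal_mem_similitudeCommutatorSpan (hB : B.IsSymm) (hC : C.IsSymm) :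
    fromBlocks 0 B C 0 ∈ similitudeCommutatorSpan (J l R) := by
  have grading : IsInfinitesimalSimilitude (J l R) 1 (fromBlocks 1 0 0 0) := by
    simp [isInfinitesimalSimilitude_J_fromBlocks_iff, isSymm_zero]
  have off_diagonal : IsInfinitesimalSimilitude (J l R) 0 (fromBlocks 0 B (-C) 0) := by
    simp [isInfinitesimalSimilitude_J_fromBlocks_iff, hB, hC.neg]
  convert commutator_mem_similitudeCommutatorSpan grading off_diagonal using 1
  simp [fromBlocks_multiply, sub_eq_add_neg, fromBlocks_neg, fromBlocks_add]

theorem fromBlocks_diagonal_isSymm_mul_mem_similitudeCommutatorSpan (hS : S.IsSymm)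
    (hT : T.IsSymm) :
    fromBlocks (S * T) 0 0 (-(S * T)ᵀ) ∈ similitudeCommutatorSpan (J l R) := by
  have upper : IsInfinitesimalSimilitude (J l R) 0 (fromBlocks 0 S 0 0) := by
    simp [isInfinitesimalSimilitude_J_fromBlocks_iff, hS, isSymm_zero]
  have lower : IsInfinitesimalSimilitude (J l R) 0 (fromBlocks 0 0 T 0) := by
    simp [isInfinitesimalSimilitude_J_fromBlocks_iff, hT, isSymm_zero]
  convert commutator_mem_similitudeCommutatorSpan upper lower using 1
  simp [fromBlocks_multiply, sub_eq_add_neg, fromBlocks_neg, fromBlocks_add, transpose_mul,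
    hS.eq, hT.eq]

theorem fromBlocks_diagonal_mem_similitudeCommutatorSpan (A : Matrix l l R) :
    fromBlocks A 0 0 (-Aᵀ) ∈ similitudeCommutatorSpan (J l R) := by
  have hA := span_isSymm_mul_isSymm_eq_top.ge (Submodule.mem_top (R := R) (x := A))
  induction hA using Submodule.span_induction with
  | mem _ h =>
    obtain ⟨S, T, hS, hT, rfl⟩ := h
    exact fromBlocks_diagonal_isSymm_mul_mem_similitudeCommutatorSpan hS hT
  | zero => simp
  | add A B _ _ hA hB => simpa [fromBlocks_add, add_comm] using add_mem hA hB
  | smul a A _ hA => simpa [fromBlocks_smul] using Submodule.smul_mem _ a hA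

theorem similitudeCommutatorSpan_J_eq_skewAdjointMatricesSubmodule :
    similitudeCommutatorSpan (J l R) = skewAdjointMatricesSubmodule (J l R) := by
  refine (similitudeCommutatorSpan_le_skewAdjointMatricesSubmodule _).antisymm fun M hM ↦ ?_
  obtain ⟨A, B, C, D, rfl⟩ : ∃ A B C D, M = fromBlocks A B C D :=
    ⟨_, _, _, _, (fromBlocks_toBlocks M).symm⟩
  rw [mem_skewAdjointMatricesSubmodule_iff_isInfinitesimalSimilitude_zero,
    isInfinitesimalSimilitude_J_fromBlocks_iff] at hM
  obtain ⟨hB, hC, rfl⟩ := hM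
  simpa [fromBlocks_add] using add_mem (fromBlocks_diagonal_mem_similitudeCommutatorSpan A)
    (fromBlocks_zero_diagonal_mem_similitudeCommutatorSpan hB hC)

end Blocks

/-- Interleaves two copies of `Fin g`: the left copy goes to the odd indices and the right copy to
the even ones, the order for which `Matrix.J` becomes `OmegaMat` without a change of sign. -/
def finSumFinEquivInterleave (g : ℕ) : Fin g ⊕ Fin g ≃ Fin (2 * g) where
  toFun := Sum.elim (fun i ↦ ⟨2 * i + 1, by omega⟩) (fun i ↦ ⟨2 * i, by omega⟩)
  invFun k := if (k : ℕ) % 2 = 1 then .inl ⟨k / 2, by omega⟩ else .inr ⟨k / 2, by omega⟩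
  left_inv := by
    rintro (i | i) <;> simp [Nat.add_mod, Nat.mul_add_div]
  right_inv k := by
    dsimp only
    split_ifs with hk <;> simp only [Sum.elim_inl, Sum.elim_inr, Fin.ext_iff] <;> omega

theorem reindex_finSumFinEquivInterleave_J (g : ℕ) (R : Type) [CommRing R] :
    reindexAlgEquiv R R (finSumFinEquivInterleave g) (J (Fin g) R) = OmegaMat g R := by
  rw [coe_reindexAlgEquiv, ← Equiv.eq_symm_apply]
  ext (i | i) (j | j) <;>
    simp only [J, OmegaMat, finSumFinEquivInterleave, reindex_symm, reindex_apply,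
      submatrix_apply, Equiv.symm_symm, Equiv.coe_fn_mk, Sum.elim_inl, Sum.elim_inr, of_apply,
      fromBlocks_apply₁₁, fromBlocks_apply₁₂, fromBlocks_apply₂₁, fromBlocks_apply₂₂,
      Matrix.zero_apply, Matrix.neg_apply, Matrix.one_apply, Fin.ext_iff] <;>
    grind

theorem spLieSet_eq_coe_skewAdjointMatricesSubmodule (g : ℕ) (R : Type) [CommRing R] :
    spLieSet g R = skewAdjointMatricesSubmodule (OmegaMat g R) := by
  ext A
  rw [SetLike.mem_coe, mem_skewAdjointMatricesSubmodule_iff_isInfinitesimalSimilitude_zero,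
    IsInfinitesimalSimilitude, zero_smul]
  rfl

theorem maximal_monodromy_stmt4_general (g : ℕ) (R : Type) [CommRing R] :
    (Submodule.span R
      {X : Matrix (Fin (2*g)) (Fin (2*g)) R |
        ∃ A B : Matrix (Fin (2*g)) (Fin (2*g)) R,
          A ∈ gspSet g R ∧ B ∈ gspSet g R ∧ X = A * B - B * A}
      : Set (Matrix (Fin (2*g)) (Fin (2*g)) R))
    = spLieSet g R := by
  have hΩ : similitudeCommutatorSpan (OmegaMat g R) =
      skewAdjointMatricesSubmodule (OmegaMat g R) := by
    rw [← reindex_finSumFinEquivInterleave_J]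
    exact similitudeCommutatorSpan_map_eq_skewAdjointMatricesSubmodule _ (transpose_reindex _ _)
      similitudeCommutatorSpan_J_eq_skewAdjointMatricesSubmodule
  rw [spLieSet_eq_coe_skewAdjointMatricesSubmodule, ← hΩ]
  rfl

/-- Let `g ≥ 2` and let `ℓ` be a prime. The `(ℤ/ℓℤ)`-linear span of the set of commutators
`{AB − BA : A, B ∈ 𝔤𝔰𝔭_{2g}(ℤ/ℓℤ)}` equals `𝔰𝔭_{2g}(ℤ/ℓℤ)`; that is, the derived subalgebra
`[𝔤𝔰𝔭_{2g}(ℤ/ℓℤ), 𝔤𝔰𝔭_{2g}(ℤ/ℓℤ)]` is `𝔰𝔭_{2g}(ℤ/ℓℤ)`. -/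
theorem maximal_monodromy_stmt4 (g ℓ : ℕ) (hg : 2 ≤ g) (hℓ : ℓ.Prime) :
    (Submodule.span (ZMod ℓ)
      {X : Matrix (Fin (2*g)) (Fin (2*g)) (ZMod ℓ) |
        ∃ A B : Matrix (Fin (2*g)) (Fin (2*g)) (ZMod ℓ),
          A ∈ gspSet g (ZMod ℓ) ∧ B ∈ gspSet g (ZMod ℓ) ∧ X = A * B - B * A}
      : Set (Matrix (Fin (2*g)) (Fin (2*g)) (ZMod ℓ)))
    = spLieSet g (ZMod ℓ) :=
  maximal_monodromy_stmt4_general g (ZMod ℓ)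
end
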